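/- arXiv:1308.3090 — 3 statements merged into one kernel-verified Lean document; each statement's English description precedes it below -/
import Mathlib

section
/- Let X₁, X₂, … be i.i.d. real random variables with mean 0 and variance 1, and let S̄_n := max_{1≤k≤n} (X₁+…+X_k). Then for every ε > 0 there exists a constant C > 0 such that E[(S̄_n/√n)² · 1_{S̄_n > C√n}] ≤ ε for all sufficiently large n ∈ ℕ. -/
open MeasureTheory ProbabilityTheory Filter
open scoped ENNReal

/-!
Let `S` be the partial sums. Doob's `L²` inequality, applied not to `S` but to the positive part of
the submartingale `S - c` with `c = C √n`, gives
`E[S̄_n² 1_{S̄_n > 2c}] ≤ 16 E[((S_n - c)⁺)²]`, because `S̄_n ≤ 2 max_k (S_k - c)⁺` on the event.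
So only the tail of the final value `S_n` has to be controlled.

Truncate the summands at a level `K` and recentre. The large parts have small second moments, so by
additivity of the variance they contribute at most `δ n`, for every `C`. The parts bounded by `K`
are sub-Gaussian by Hoeffding's lemma, so they contribute `O(exp (K² / 2 - C)) n`, which is small
for `C` large.
-/

section PartialSups

variable {Ω : Type*} {mΩ : MeasurableSpace Ω}

lemma memLp_partialSups {E : Type*} [NormedAddCommGroup E] [Lattice E] [HasSolidNorm E]
    [IsOrderedAddMonoid E] {μ : Measure Ω} {p : ℝ≥0∞} {f : ℕ → Ω → E}
    (hf : ∀ n, MemLp (f n) p μ) (n : ℕ) : MemLp (partialSups f n) p μ := by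
  induction n with
  | zero => simpa using hf 0
  | succ n ih => simpa only [partialSups_add_one] using ih.sup (hf (n + 1))

lemma stronglyMeasurable_partialSups {E : Type*} [TopologicalSpace E] [SemilatticeSup E]
    [ContinuousSup E] {f : ℕ → Ω → E} {n : ℕ} (hf : ∀ k ≤ n, StronglyMeasurable (f k)) :
    StronglyMeasurable (partialSups f n) := by
  induction n with
  | zero => simpa using hf 0 le_rfl
  | succ n ih =>
    rw [partialSups_add_one]
    exact (ih fun k hk ↦ hf k (by lia)).sup (hf (n + 1) le_rfl)

lemma sup'_Icc_one_eq_partialSups {α : Type*} [SemilatticeSup α] (f : ℕ → α) (n : ℕ) :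
    (Finset.Icc 1 (n + 1)).sup' (Finset.nonempty_Icc.mpr n.succ_pos) f =
      partialSups (fun k ↦ f (k + 1)) n := by
  refine le_antisymm (Finset.sup'_le _ _ fun k hk ↦ ?_)
    (partialSups_le _ _ _ fun k hk ↦ Finset.le_sup' f (Finset.mem_Icc.mpr (by lia)))
  obtain ⟨hk1, hkn⟩ := Finset.mem_Icc.mp hk
  obtain ⟨j, rfl⟩ := Nat.exists_eq_add_of_le' hk1
  exact le_partialSups_of_le (fun k ↦ f (k + 1)) (by lia)

end PartialSups

section Doob

lemma partialSups_posPart_nonneg (u : ℕ → ℝ) (n : ℕ) : 0 ≤ partialSups u⁺ n :=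
  (posPart_nonneg (u n)).trans (le_partialSups u⁺ n)

-- The running maximum `M` increases at step `i + 1` only if `M (i + 1) = (u (i + 1))⁺`, and then
-- `M i * u (i + 1) ≤ (M i ^ 2 + M (i + 1) ^ 2) / 2` by Young's inequality.
lemma sq_partialSups_posPart_add_sum_le (u : ℕ → ℝ) (n : ℕ) :
    partialSups u⁺ n ^ 2 / 2 + ∑ i ∈ Finset.range n, partialSups u⁺ i * (u (i + 1) - u i) ≤
      partialSups u⁺ n * u n := by
  have posPart_mul_self : ∀ x : ℝ, x⁺ * x = x⁺ ^ 2 := fun x ↦ by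
    rcases le_total 0 x with h | h <;> simp [h, sq]
  induction n with
  | zero =>
    simp only [partialSups_zero, Pi.posPart_apply, Finset.range_zero, Finset.sum_empty,
      posPart_mul_self]
    linarith [sq_nonneg (u 0)⁺]
  | succ n ih =>
    rw [Finset.sum_range_succ, partialSups_add_one, Pi.posPart_apply]
    rcases le_total (partialSups u⁺ n) (u (n + 1))⁺ with h | h
    · have young := two_mul_le_add_sq (partialSups u⁺ n) (u (n + 1))⁺
      have := mul_le_mul_of_nonneg_left (le_posPart (u (n + 1))) (partialSups_posPart_nonneg u n)
      rw [max_eq_right h, posPart_mul_self]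
      linarith
    · rw [max_eq_left h]
      linarith

lemma sq_partialSups_posPart_le (u : ℕ → ℝ) (n : ℕ) :
    partialSups u⁺ n ^ 2 ≤
      4 * (u n)⁺ ^ 2 - 4 * ∑ i ∈ Finset.range n, partialSups u⁺ i * (u (i + 1) - u i) := by
  have key := sq_partialSups_posPart_add_sum_le u n
  have := mul_le_mul_of_nonneg_left (le_posPart (u n)) (partialSups_posPart_nonneg u n)
  linarith [sq_nonneg (partialSups u⁺ n - 2 * (u n)⁺)]

variable {Ω : Type*} {mΩ : MeasurableSpace Ω} {μ : Measure Ω}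

lemma integral_mul_submartingale_sub_nonneg {ι : Type*} [Preorder ι] {ℱ : Filtration ι mΩ}
    [SigmaFiniteFiltration μ ℱ] {f : ι → Ω → ℝ} (hf : Submartingale f ℱ μ) {i j : ι} (hij : i ≤ j)
    {w : Ω → ℝ} (hw : StronglyMeasurable[ℱ i] w) (hw_nonneg : 0 ≤ w)
    (hint : Integrable (w * (f j - f i)) μ) : 0 ≤ ∫ ω, w ω * (f j ω - f i ω) ∂μ := by
  change 0 ≤ ∫ ω, (w * (f j - f i)) ω ∂μ
  rw [← integral_condExp (ℱ.le i)]
  refine integral_nonneg_of_ae ?_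
  filter_upwards [condExp_mul_of_stronglyMeasurable_left hw hint
    ((hf.integrable j).sub (hf.integrable i)), hf.condExp_sub_nonneg hij] with ω hmul hsub
  rw [hmul]
  exact mul_nonneg (hw_nonneg ω) hsub

theorem integral_sq_partialSups_posPart_le {ℱ : Filtration ℕ mΩ} [SigmaFiniteFiltration μ ℱ]
    {f : ℕ → Ω → ℝ} (hf : Submartingale f ℱ μ) (hL2 : ∀ n, MemLp (f n) 2 μ) (n : ℕ) :
    ∫ ω, partialSups f⁺ n ω ^ 2 ∂μ ≤ 4 * ∫ ω, (f n ω)⁺ ^ 2 ∂μ := by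
  have hpos (k : ℕ) : MemLp (f⁺ k) 2 μ := (hL2 k).pos_part
  have hmax (k : ℕ) : MemLp (partialSups f⁺ k) 2 μ := memLp_partialSups hpos k
  have hint (i : ℕ) : Integrable (fun ω ↦ partialSups f⁺ i ω * (f (i + 1) ω - f i ω)) μ :=
    (hmax i).integrable_mul ((hL2 (i + 1)).sub (hL2 i))
  have hsum : Integrable
      (fun ω ↦ ∑ i ∈ Finset.range n, partialSups f⁺ i ω * (f (i + 1) ω - f i ω)) μ :=
    integrable_finsetSum _ fun i _ ↦ hint i
  have hfn : Integrable (fun ω ↦ (f n ω)⁺ ^ 2) μ := (hpos n).integrable_sq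
  have transform_nonneg (i : ℕ) : 0 ≤ ∫ ω, partialSups f⁺ i ω * (f (i + 1) ω - f i ω) ∂μ := by
    refine integral_mul_submartingale_sub_nonneg hf i.le_succ
      (stronglyMeasurable_partialSups fun k hk ↦ ?_) (fun ω ↦ ?_) (hint i)
    · exact (hf.pos.stronglyMeasurable k).mono (ℱ.mono hk)
    · rw [Pi.partialSups_apply]
      exact partialSups_posPart_nonneg (fun k ↦ f k ω) i
  calc ∫ ω, partialSups f⁺ n ω ^ 2 ∂μ
      ≤ ∫ ω, (4 * (f n ω)⁺ ^ 2 -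
          4 * ∑ i ∈ Finset.range n, partialSups f⁺ i ω * (f (i + 1) ω - f i ω)) ∂μ := by
        refine integral_mono (hmax n).integrable_sq
          ((hfn.const_mul 4).sub (hsum.const_mul 4)) fun ω ↦ ?_
        simp only [Pi.partialSups_apply]
        exact sq_partialSups_posPart_le (fun k ↦ f k ω) n
    _ = 4 * ∫ ω, (f n ω)⁺ ^ 2 ∂μ -
          4 * ∑ i ∈ Finset.range n, ∫ ω, partialSups f⁺ i ω * (f (i + 1) ω - f i ω) ∂μ := by
        rw [integral_sub (hfn.const_mul 4) (hsum.const_mul 4), integral_const_mul,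
          integral_const_mul, integral_finsetSum _ fun i _ ↦ hint i]
    _ ≤ 4 * ∫ ω, (f n ω)⁺ ^ 2 ∂μ := by
        linarith [Finset.sum_nonneg fun i (_ : i ∈ Finset.range n) ↦ transform_nonneg i]

theorem setIntegral_sq_partialSups_le [IsFiniteMeasure μ] {ℱ : Filtration ℕ mΩ}
    {f : ℕ → Ω → ℝ} (hf : Submartingale f ℱ μ) (hL2 : ∀ n, MemLp (f n) 2 μ) {c : ℝ} (hc : 0 ≤ c)
    (n : ℕ) :
    ∫ ω in {ω | 2 * c < partialSups f n ω}, partialSups f n ω ^ 2 ∂μ ≤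
      16 * ∫ ω, (f n ω - c)⁺ ^ 2 ∂μ := by
  let g : ℕ → Ω → ℝ := f - fun _ _ ↦ c
  have hg : Submartingale g ℱ μ := hf.sub_martingale (martingale_const ℱ μ c)
  have hgL2 (k : ℕ) : MemLp (g k) 2 μ := (hL2 k).sub (memLp_const c)
  have hmax : Integrable (fun ω ↦ 4 * partialSups g⁺ n ω ^ 2) μ :=
    (memLp_partialSups (fun k ↦ (hgL2 k).pos_part) n).integrable_sq.const_mul 4
  have hset : MeasurableSet {ω | 2 * c < partialSups f n ω} :=
    measurableSet_lt measurable_const (stronglyMeasurable_partialSups fun k _ ↦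
      (hf.stronglyMeasurable k).mono (ℱ.le k)).measurable
  have sub_le (ω : Ω) : partialSups f n ω ≤ c + partialSups g⁺ n ω := by
    simp only [Pi.partialSups_apply]
    refine partialSups_le _ _ _ fun k hk ↦ ?_
    have : f k ω - c ≤ partialSups (fun k ↦ g⁺ k ω) n :=
      (le_posPart (g k ω)).trans (le_partialSups_of_le (fun k ↦ g⁺ k ω) hk)
    linarith
  calc ∫ ω in {ω | 2 * c < partialSups f n ω}, partialSups f n ω ^ 2 ∂μ
      ≤ ∫ ω in {ω | 2 * c < partialSups f n ω}, 4 * partialSups g⁺ n ω ^ 2 ∂μ := by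
        refine setIntegral_mono_on (memLp_partialSups hL2 n).integrable_sq.integrableOn
          hmax.integrableOn hset fun ω (hω : 2 * c < _) ↦ ?_
        nlinarith [sub_le ω]
    _ ≤ ∫ ω, 4 * partialSups g⁺ n ω ^ 2 ∂μ :=
        setIntegral_le_integral hmax (ae_of_all _ fun ω ↦ by positivity)
    _ ≤ 16 * ∫ ω, (f n ω - c)⁺ ^ 2 ∂μ := by
        rw [integral_const_mul]
        have : ∫ ω, partialSups g⁺ n ω ^ 2 ∂μ ≤ 4 * ∫ ω, (f n ω - c)⁺ ^ 2 ∂μ :=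
          integral_sq_partialSups_posPart_le hg hgL2 n
        linarith

end Doob

section IndependentSums

variable {Ω ι : Type*} {mΩ : MeasurableSpace Ω} {μ : Measure Ω}

lemma martingale_sum_range_succ {E : Type*} [NormedAddCommGroup E] [NormedSpace ℝ E]
    [CompleteSpace E] [SecondCountableTopology E] [MeasurableSpace E] [BorelSpace E]
    {X : ℕ → Ω → E} (hX : ∀ i, StronglyMeasurable (X i)) (hint : ∀ i, Integrable (X i) μ)
    (hindep : iIndepFun X μ) (hmean : ∀ i, μ[X i] = 0) :
    Martingale (fun n ↦ ∑ i ∈ Finset.range (n + 1), X i) (Filtration.natural X hX) μ := by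
  have := hindep.isProbabilityMeasure
  refine martingale_of_condExp_sub_eq_zero_nat (fun n ↦ ?_)
    (fun n ↦ integrable_finsetSum' _ fun i _ ↦ hint i) fun n ↦ ?_
  · refine Finset.stronglyMeasurable_sum _ fun i hi ↦ ?_
    exact (Filtration.stronglyAdapted_natural hX i).mono
      ((Filtration.natural X hX).mono (Finset.mem_range_succ_iff.mp hi))
  · simp only [Finset.sum_range_succ _ (n + 1), add_sub_cancel_left]
    exact (hindep.condExp_natural_ae_eq_of_lt hX n.lt_succ_self).trans
      (ae_of_all _ fun _ ↦ hmean (n + 1))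

lemma integral_sq_sum_sub_integral_le [IsProbabilityMeasure μ] {X : ι → Ω → ℝ} {s : Finset ι}
    (hL2 : ∀ i ∈ s, MemLp (X i) 2 μ)
    (hindep : (s : Set ι).Pairwise fun i j ↦ IndepFun (X i) (X j) μ) :
    ∫ ω, (∑ i ∈ s, (X i ω - μ[X i])) ^ 2 ∂μ ≤ ∑ i ∈ s, ∫ ω, X i ω ^ 2 ∂μ := by
  calc ∫ ω, (∑ i ∈ s, (X i ω - μ[X i])) ^ 2 ∂μ
      = Var[∑ i ∈ s, X i; μ] := by
        rw [variance_eq_integral (memLp_finsetSum' s hL2).aemeasurable]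
        simp only [Finset.sum_apply, Finset.sum_sub_distrib]
        rw [integral_finsetSum _ fun i hi ↦ (hL2 i hi).integrable one_le_two]
    _ = ∑ i ∈ s, Var[X i; μ] := IndepFun.variance_sum hL2 hindep
    _ ≤ ∑ i ∈ s, ∫ ω, X i ω ^ 2 ∂μ :=
        Finset.sum_le_sum fun i hi ↦ variance_le_expectation_sq (hL2 i hi).1

lemma integral_sq_posPart_sub_le {X : Ω → ℝ} {v : NNReal} (hX : HasSubgaussianMGF X v μ)
    {t : ℝ} (ht : 0 < t) (c : ℝ) :
    ∫ ω, (X ω - c)⁺ ^ 2 ∂μ ≤ 2 / t ^ 2 * Real.exp (v * t ^ 2 / 2 - t * c) := by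
  have sq_posPart_le_exp (x : ℝ) : x⁺ ^ 2 ≤ 2 * Real.exp x := by
    rcases le_total 0 x with h | h
    · rw [posPart_eq_self.mpr h]
      linarith [Real.quadratic_le_exp_of_nonneg h]
    · rw [posPart_eq_zero.mpr h]
      linarith [Real.exp_pos x]
  have sq_posPart_sub_le (x : ℝ) :
      (x - c)⁺ ^ 2 ≤ 2 / t ^ 2 * Real.exp (-(t * c)) * Real.exp (t * x) := by
    have posPart_scale : (t * (x - c))⁺ = t * (x - c)⁺ := by
      simp only [posPart_def, mul_max_of_nonneg _ _ ht.le, mul_zero]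
    calc (x - c)⁺ ^ 2 = (t * (x - c))⁺ ^ 2 / t ^ 2 := by rw [posPart_scale]; field_simp
      _ ≤ 2 * Real.exp (t * (x - c)) / t ^ 2 := by gcongr; exact sq_posPart_le_exp _
      _ = 2 / t ^ 2 * Real.exp (-(t * c)) * Real.exp (t * x) := by
        rw [mul_assoc, ← Real.exp_add]; ring_nf
  calc ∫ ω, (X ω - c)⁺ ^ 2 ∂μ
      ≤ ∫ ω, 2 / t ^ 2 * Real.exp (-(t * c)) * Real.exp (t * X ω) ∂μ :=
        integral_mono_of_nonneg (ae_of_all _ fun ω ↦ sq_nonneg _)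
          ((hX.integrable_exp_mul t).const_mul _) (ae_of_all _ fun ω ↦ sq_posPart_sub_le (X ω))
    _ = 2 / t ^ 2 * Real.exp (-(t * c)) * mgf X μ t := integral_const_mul _ _
    _ ≤ 2 / t ^ 2 * Real.exp (-(t * c)) * Real.exp (v * t ^ 2 / 2) := by
        gcongr
        exact hX.mgf_le t
    _ = 2 / t ^ 2 * Real.exp (v * t ^ 2 / 2 - t * c) := by
        rw [mul_assoc, ← Real.exp_add, neg_add_eq_sub]

lemma integral_sq_posPart_sum_sub_le_of_bounded {Y : ι → Ω → ℝ} {K : ℝ}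
    (hmeas : ∀ i, AEMeasurable (Y i) μ) (hbound : ∀ i, ∀ᵐ ω ∂μ, |Y i ω| ≤ K)
    (hindep : iIndepFun Y μ) (s : Finset ι) (C : ℝ) :
    ∫ ω, (∑ i ∈ s, (Y i ω - μ[Y i]) - C * √(s.card : ℝ))⁺ ^ 2 ∂μ ≤
      2 * Real.exp (K ^ 2 / 2 - C) * s.card := by
  have := hindep.isProbabilityMeasure
  rcases s.eq_empty_or_nonempty with rfl | hs
  · simp
  have hcard : (0 : ℝ) < s.card := by exact_mod_cast hs.card_pos
  have hsub (i : ι) : HasSubgaussianMGF (fun ω ↦ Y i ω - μ[Y i]) ((‖K - -K‖₊ / 2) ^ 2) μ :=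
    hasSubgaussianMGF_of_mem_Icc (hmeas i) ((hbound i).mono fun ω hω ↦ abs_le.mp hω)
  have hcentered : iIndepFun (fun i ω ↦ Y i ω - μ[Y i]) μ :=
    hindep.comp (fun i x ↦ x - ∫ ω, Y i ω ∂μ) fun i ↦ measurable_id.sub_const _
  have hsum := HasSubgaussianMGF.sum_of_iIndepFun hcentered (s := s) fun i _ ↦ hsub i
  have hroot : 0 < √(s.card : ℝ) := Real.sqrt_pos.mpr hcard
  refine (integral_sq_posPart_sub_le hsum (inv_pos.mpr hroot) _).trans_eq ?_
  have hvar : ((∑ _i ∈ s, (‖K - -K‖₊ / 2) ^ 2 : NNReal) : ℝ) = s.card * K ^ 2 := by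
    simp [← two_mul]
  rw [hvar, inv_pow, Real.sq_sqrt hcard.le]
  field_simp

lemma sq_posPart_add_le (a b : ℝ) : (a + b)⁺ ^ 2 ≤ 2 * a⁺ ^ 2 + 2 * b ^ 2 := by
  have h : (a + b)⁺ ≤ a⁺ + |b| :=
    max_le (add_le_add (le_posPart a) (le_abs_self b)) (by positivity)
  calc (a + b)⁺ ^ 2 ≤ (a⁺ + |b|) ^ 2 := by gcongr
    _ ≤ 2 * a⁺ ^ 2 + 2 * b ^ 2 := by
      rw [← mul_add, ← sq_abs b]
      exact add_sq_le

lemma integral_sq_posPart_add_le {f g : Ω → ℝ} (hf : MemLp f 2 μ) (hg : MemLp g 2 μ) :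
    ∫ ω, (f ω + g ω)⁺ ^ 2 ∂μ ≤ 2 * ∫ ω, (f ω)⁺ ^ 2 ∂μ + 2 * ∫ ω, g ω ^ 2 ∂μ := by
  have hf_int : Integrable (fun ω ↦ 2 * (f ω)⁺ ^ 2) μ := hf.pos_part.integrable_sq.const_mul 2
  have hg_int : Integrable (fun ω ↦ 2 * g ω ^ 2) μ := hg.integrable_sq.const_mul 2
  rw [← integral_const_mul, ← integral_const_mul, ← integral_add hf_int hg_int]
  exact integral_mono_of_nonneg (ae_of_all _ fun ω ↦ sq_nonneg _) (hf_int.add hg_int)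
    (ae_of_all _ fun ω ↦ sq_posPart_add_le (f ω) (g ω))

lemma integral_sq_posPart_sum_sub_le {X : ι → Ω → ℝ} {φ : ℝ → ℝ} {K δ : ℝ}
    (hL2 : ∀ i, MemLp (X i) 2 μ) (hindep : iIndepFun X μ) (hmean : ∀ i, μ[X i] = 0)
    (hφ : Measurable φ) (hbound : ∀ x, |x - φ x| ≤ K) (hδ : ∀ i, ∫ ω, φ (X i ω) ^ 2 ∂μ ≤ δ)
    (s : Finset ι) (C : ℝ) :
    ∫ ω, (∑ i ∈ s, X i ω - C * √(s.card : ℝ))⁺ ^ 2 ∂μ ≤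
      (4 * Real.exp (K ^ 2 / 2 - C) + 2 * δ) * s.card := by
  have := hindep.isProbabilityMeasure
  let Y (i : ι) (ω : Ω) : ℝ := X i ω - φ (X i ω)
  let Z (i : ι) (ω : Ω) : ℝ := φ (X i ω)
  have hYmeas (i : ι) : AEMeasurable (Y i) μ :=
    (measurable_id.sub hφ).comp_aemeasurable (hL2 i).aemeasurable
  have hYL2 (i : ι) : MemLp (Y i) 2 μ :=
    .of_bound (hYmeas i).aestronglyMeasurable K (ae_of_all _ fun ω ↦ hbound (X i ω))
  have hZL2 (i : ι) : MemLp (Z i) 2 μ := by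
    have : Z i = X i - Y i := by ext ω; simp [Y, Z]
    exact this ▸ (hL2 i).sub (hYL2 i)
  have hYindep : iIndepFun Y μ := hindep.comp (fun _ x ↦ x - φ x) fun _ ↦ measurable_id.sub hφ
  have hZindep : iIndepFun Z μ := hindep.comp (fun _ ↦ φ) fun _ ↦ hφ
  have hmeanYZ (i : ι) : μ[Y i] + μ[Z i] = 0 := by
    rw [← integral_add ((hYL2 i).integrable one_le_two) ((hZL2 i).integrable one_le_two),
      ← hmean i]
    simp [Y, Z]
  let A (ω : Ω) : ℝ := ∑ i ∈ s, (Y i ω - μ[Y i])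
  let B (ω : Ω) : ℝ := ∑ i ∈ s, (Z i ω - μ[Z i])
  have sum_eq (ω : Ω) : ∑ i ∈ s, X i ω = A ω + B ω := by
    rw [← Finset.sum_add_distrib]
    refine Finset.sum_congr rfl fun i _ ↦ ?_
    linear_combination (norm := (simp only [Y, Z]; ring)) hmeanYZ i
  have hA : ∫ ω, (A ω - C * √(s.card : ℝ))⁺ ^ 2 ∂μ ≤ 2 * Real.exp (K ^ 2 / 2 - C) * s.card :=
    integral_sq_posPart_sum_sub_le_of_bounded hYmeas
      (fun i ↦ ae_of_all _ fun ω ↦ hbound (X i ω)) hYindep s C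
  have hB : ∫ ω, B ω ^ 2 ∂μ ≤ s.card * δ := by
    refine (integral_sq_sum_sub_integral_le (fun i _ ↦ hZL2 i)
      fun i _ j _ hij ↦ hZindep.indepFun hij).trans ?_
    simpa only [nsmul_eq_mul] using Finset.sum_le_card_nsmul s _ δ fun i _ ↦ hδ i
  have hAB := integral_sq_posPart_add_le (f := fun ω ↦ A ω - C * √(s.card : ℝ)) (g := B)
    ((memLp_finsetSum s fun i _ ↦ (hYL2 i).sub (memLp_const _)).sub (memLp_const _))
    (memLp_finsetSum s fun i _ ↦ (hZL2 i).sub (memLp_const _))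
  simp only [sum_eq, add_sub_right_comm]
  linarith

lemma integral_sq_le_of_eLpNorm_le {f : Ω → ℝ} (hf : MemLp f 2 μ) {δ : ℝ} (hδ : 0 ≤ δ)
    (h : eLpNorm f 2 μ ≤ ENNReal.ofReal √δ) : ∫ ω, f ω ^ 2 ∂μ ≤ δ := by
  rw [hf.eLpNorm_eq_integral_rpow_norm two_ne_zero ENNReal.ofNat_ne_top,
    ENNReal.ofReal_le_ofReal_iff (Real.sqrt_nonneg δ)] at h
  simpa [← Real.sqrt_eq_rpow, ← one_div, Real.sqrt_le_sqrt_iff hδ] using h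

lemma measurable_indicator_le_nnnorm (K : NNReal) :
    Measurable ({x : ℝ | K ≤ ‖x‖₊}.indicator id) :=
  measurable_id.indicator (measurableSet_le measurable_const measurable_nnnorm)

lemma exists_integral_sq_indicator_le {X : ι → Ω → ℝ} (hUI : UniformIntegrable X 2 μ) {δ : ℝ}
    (hδ : 0 < δ) :
    ∃ K : NNReal, ∀ i, ∫ ω, {x : ℝ | K ≤ ‖x‖₊}.indicator id (X i ω) ^ 2 ∂μ ≤ δ := by
  obtain ⟨K, hK⟩ := hUI.spec two_ne_zero ENNReal.ofNat_ne_top (Real.sqrt_pos.mpr hδ)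
  refine ⟨K, fun i ↦ ?_⟩
  have htail : MemLp ({ω | K ≤ ‖X i ω‖₊}.indicator (X i)) 2 μ :=
    ⟨((measurable_indicator_le_nnnorm K).comp_aemeasurable
        (hUI.memLp i).aemeasurable).aestronglyMeasurable,
      (hK i).trans_lt ENNReal.ofReal_lt_top⟩
  exact integral_sq_le_of_eLpNorm_le htail hδ.le (hK i)

theorem exists_integral_sq_posPart_sum_sub_le {X : ι → Ω → ℝ} (hUI : UniformIntegrable X 2 μ)
    (hindep : iIndepFun X μ) (hmean : ∀ i, μ[X i] = 0) {ε : ℝ} (hε : 0 < ε) :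
    ∃ C > (0 : ℝ), ∀ s : Finset ι,
      ∫ ω, (∑ i ∈ s, X i ω - C * √(s.card : ℝ))⁺ ^ 2 ∂μ ≤ ε * s.card := by
  obtain ⟨K, hK⟩ := exists_integral_sq_indicator_le hUI (δ := ε / 4) (by positivity)
  have hbound (x : ℝ) : |x - {x : ℝ | K ≤ ‖x‖₊}.indicator id x| ≤ K := by
    by_cases hx : K ≤ ‖x‖₊
    · simp [hx]
    · simpa [hx] using NNReal.coe_le_coe.mpr (not_le.mp hx).le
  have hexp : Tendsto (fun C : ℝ ↦ 4 * Real.exp ((K : ℝ) ^ 2 / 2 - C)) atTop (nhds 0) := by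
    simpa only [Function.comp_def, sub_eq_add_neg, mul_zero] using
      (Real.tendsto_exp_atBot.comp
        (tendsto_const_nhds.add_atBot tendsto_neg_atTop_atBot)).const_mul 4
  obtain ⟨C, hC, hCpos⟩ :=
    ((hexp.eventually_le_const (half_pos hε)).and (eventually_gt_atTop 0)).exists
  refine ⟨C, hCpos, fun s ↦ (integral_sq_posPart_sum_sub_le hUI.memLp hindep hmean
    (measurable_indicator_le_nnnorm K) hbound hK s C).trans ?_⟩
  gcongr
  linarith

end IndependentSums

theorem stmt11_general {Ω : Type*} {mΩ : MeasurableSpace Ω} {μ : Measure Ω} {X : ℕ → Ω → ℝ}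
    (hmeas : ∀ i, Measurable (X i)) (hindep : iIndepFun X μ) (hUI : UniformIntegrable X 2 μ)
    (hmean : ∀ i, ∫ ω, X i ω ∂μ = 0) {Sbar : ℕ → Ω → ℝ}
    (hSbar : ∀ n, ∀ hn : 1 ≤ n, ∀ ω, Sbar n ω =
      (Finset.Icc 1 n).sup' (Finset.nonempty_Icc.mpr hn)
        (fun k => ∑ i ∈ Finset.range k, X i ω)) :
    ∀ ε > (0 : ℝ), ∃ C > (0 : ℝ), ∀ n ≥ 1,
      ∫ ω in {ω | Sbar n ω > C * Real.sqrt n}, (Sbar n ω / Real.sqrt n) ^ 2 ∂μ ≤ ε := by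
  intro ε hε
  have := hindep.isProbabilityMeasure
  obtain ⟨C, hC, htail⟩ :=
    exists_integral_sq_posPart_sum_sub_le hUI hindep hmean (ε := ε / 16) (by positivity)
  refine ⟨2 * C, by positivity, fun n hn ↦ ?_⟩
  obtain ⟨m, rfl⟩ := Nat.exists_eq_add_of_le' hn
  let S (k : ℕ) : Ω → ℝ := ∑ i ∈ Finset.range (k + 1), X i
  have hS : Martingale S (Filtration.natural X fun i ↦ (hmeas i).stronglyMeasurable) μ :=
    martingale_sum_range_succ _ (fun i ↦ (hUI.memLp i).integrable one_le_two) hindep hmean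
  have hSL2 (k : ℕ) : MemLp (S k) 2 μ := memLp_finsetSum' _ fun i _ ↦ hUI.memLp i
  have hSbar_eq : Sbar (m + 1) = partialSups S m := by
    ext ω
    rw [hSbar _ hn, sup'_Icc_one_eq_partialSups, Pi.partialSups_apply]
    simp only [S, Finset.sum_apply]
  have htail_S : ∫ ω, (S m ω - C * √(m + 1 : ℕ))⁺ ^ 2 ∂μ ≤ ε / 16 * (m + 1 : ℕ) := by
    simpa only [S, Finset.sum_apply, Finset.card_range] using htail (Finset.range (m + 1))
  have hmax := setIntegral_sq_partialSups_le hS.submartingale hSL2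
    (c := C * √(m + 1 : ℕ)) (by positivity) m
  simp only [hSbar_eq, gt_iff_lt, mul_assoc, div_pow, integral_div]
  rw [Real.sq_sqrt (Nat.cast_nonneg _), div_le_iff₀ (by positivity)]
  linarith

/-- Uniform smallness of the tail second moment of `S̄ n / √n`: for every `ε > 0`
there is `C > 0` with `E[(S̄ n/√n)² 1_{S̄ n > C √n}] ≤ ε` for all large `n`. -/
theorem stmt11 {Ω : Type*} [MeasureSpace Ω] [IsProbabilityMeasure (ℙ : Measure Ω)]
    (X : ℕ → Ω → ℝ) (hmeas : ∀ i, Measurable (X i))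
    (hindep : iIndepFun X ℙ)
    (hident : ∀ i, Measure.map (X i) ℙ = Measure.map (X 0) ℙ)
    (hL2 : MemLp (X 0) 2 ℙ)
    (hmean : ∫ ω, X 0 ω ∂ℙ = 0)
    (hvar : ∫ ω, (X 0 ω) ^ 2 ∂ℙ = 1)
    (Sbar : ℕ → Ω → ℝ)
    (hSbar : ∀ n, ∀ hn : 1 ≤ n, ∀ ω, Sbar n ω =
      (Finset.Icc 1 n).sup' (Finset.nonempty_Icc.mpr hn)
        (fun k => ∑ i ∈ Finset.range k, X i ω)) :
    ∀ ε > (0 : ℝ), ∃ C > (0 : ℝ), ∃ N : ℕ, ∀ n ≥ N,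
      ∫ ω in {ω | Sbar n ω > C * Real.sqrt n},
        (Sbar n ω / Real.sqrt n) ^ 2 ∂ℙ ≤ ε := by
  have hid (i : ℕ) : IdentDistrib (X i) (X 0) ℙ ℙ :=
    ⟨(hmeas i).aemeasurable, (hmeas 0).aemeasurable, hident i⟩
  exact fun ε hε ↦ (stmt11_general hmeas hindep
    (MemLp.uniformIntegrable_of_identDistrib one_le_two ENNReal.ofNat_ne_top hL2 hid)
    (fun i ↦ (hid i).integral_eq.trans hmean) hSbar ε hε).imp
      fun C ↦ And.imp_right fun hC ↦ ⟨1, hC⟩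
end

section
/- Let X₁, X₂, … be i.i.d. real random variables with mean 0 and variance 1, and let S̄_n := max_{1≤k≤n} (X₁+…+X_k). Then there exists γ > 0 such that for each j = 0, 1, 2, sup_{|t| ≤ γ√n} | (d/dt)^j ( E[e^{i t S̄_n/√n}] − ĝ(t) ) | → 0 as n → ∞, where ĝ(t) := E[e^{i t |Z|}] is the characteristic function of the one-sided standard normal distribution. -/
open MeasureTheory ProbabilityTheory Filter
open scoped ENNReal

/-!
The running maximum `M_n = max_{0 ≤ k ≤ n} S_k` satisfies Lindley's recursion
`M_{n+1} = (X + M_n)⁺` in law. Truncation changes the characteristic function only by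
`|θ| E (X + M_n)⁻`, and its real part only to second order, by `θ² / 2 · E ((X + M_n)⁻)²`. This
second moment tends to `0`, so the real part of the characteristic function of `M_n / √n` converges
to `exp (-t² / 2)`. Symmetrising, `M_n / √n` with an independent random sign is asymptotically
standard normal, hence `M_n / √n` converges in law to `|Z|`.

The means of the undershoots `(X + M_n)⁻` decrease and sum to `E M_n = O(√n)`, so they are
`O(n ^ (-1/2))`. Combined with `|φ_X(θ)| ≤ 1 - θ² / 4` near `0`, this bounds `|t| |φ_n(t)|` on
`|t| ≤ γ √n` and makes the convergence of characteristic functions uniform there. Second moments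
converge too, which makes the first two derivatives asymptotically equicontinuous; and uniform decay
of a function passes to an asymptotically equicontinuous derivative, by comparing that derivative
with a difference quotient.
-/

open scoped Topology

section UniformlyVanishing

variable {ι E : Type*} [NormedAddCommGroup E] {l : Filter ι} {a : ι → ℝ} {F G : ι → ℝ → E}

/-- `sup_{|t| ≤ a n} ‖F n t‖` tends to zero along `l`: uniform convergence to zero on windows
`[-a n, a n]` that may depend on `n`. -/
def UniformlyVanishing (l : Filter ι) (a : ι → ℝ) (F : ι → ℝ → E) : Prop :=
  ∀ ε > 0, ∀ᶠ n in l, ∀ t, |t| ≤ a n → ‖F n t‖ ≤ ε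

/-- The functions `F n` are uniformly equicontinuous on the line up to an error that vanishes along
`l`. Modulo such errors this is what Ascoli-type arguments need. -/
def AsymptoticallyEquicontinuous (l : Filter ι) (F : ι → ℝ → E) : Prop :=
  ∀ ε > 0, ∃ h > 0, ∀ᶠ n in l, ∀ s t, |s - t| ≤ h → ‖F n s - F n t‖ ≤ ε

lemma AsymptoticallyEquicontinuous.sub (hF : AsymptoticallyEquicontinuous l F)
    (hG : AsymptoticallyEquicontinuous l G) :
    AsymptoticallyEquicontinuous l (fun n t ↦ F n t - G n t) := by
  intro ε hε
  obtain ⟨h₁, h₁pos, hF⟩ := hF (ε / 2) (half_pos hε)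
  obtain ⟨h₂, h₂pos, hG⟩ := hG (ε / 2) (half_pos hε)
  refine ⟨min h₁ h₂, lt_min h₁pos h₂pos, ?_⟩
  filter_upwards [hF, hG] with n hFn hGn s t hst
  rw [sub_sub_sub_comm]
  refine (norm_sub_le _ _).trans ?_
  linarith [hFn s t (hst.trans (min_le_left _ _)), hGn s t (hst.trans (min_le_right _ _))]

lemma AsymptoticallyEquicontinuous.uniformlyVanishing_const
    (hF : AsymptoticallyEquicontinuous l F) (hlim : ∀ t, Tendsto (F · t) l (𝓝 0)) (K : ℝ) :
    UniformlyVanishing l (fun _ ↦ K) F := by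
  intro ε hε
  obtain ⟨h, h_pos, hF⟩ := hF (ε / 2) (half_pos hε)
  obtain ⟨S, -, hSfin, hcover⟩ :=
    Metric.finite_approx_of_totallyBounded (isCompact_Icc (a := -K) (b := K)).totallyBounded h h_pos
  have hS : ∀ᶠ n in l, ∀ s ∈ S, ‖F n s‖ ≤ ε / 2 :=
    hSfin.eventually_all.2 fun s _ ↦
      (hlim s).norm.eventually (ge_mem_nhds (by simpa using half_pos hε))
  filter_upwards [hF, hS] with n hFn hSn t ht
  obtain ⟨s, hs, hts⟩ := Set.mem_iUnion₂.1 (hcover (abs_le.1 ht))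
  have := hFn t s (Metric.mem_ball.1 hts).le
  linarith [hSn s hs, norm_le_norm_sub_add (F n t) (F n s)]

lemma UniformlyVanishing.of_forall_const {C : ℝ}
    (hF : ∀ K : ℝ, UniformlyVanishing l (fun _ ↦ K) F)
    (hdecay : ∀ᶠ n in l, ∀ t, |t| ≤ a n → |t| * ‖F n t‖ ≤ C) : UniformlyVanishing l a F := by
  intro ε hε
  filter_upwards [hdecay, hF (|C| / ε) ε hε] with n hdecay_n hFn t ht
  rcases le_or_gt |t| (|C| / ε) with htK | htK
  · exact hFn t htK
  · have ht0 : 0 < |t| := htK.trans_le' (by positivity)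
    refine le_of_mul_le_mul_left ?_ ht0
    linarith [hdecay_n t ht, le_abs_self C, (div_lt_iff₀ hε).1 htK]

lemma exists_abs_le_abs_sub_eq {a h t : ℝ} (h_nonneg : 0 ≤ h) (hha : h ≤ a) (ht : |t| ≤ a) :
    ∃ s, |s| ≤ a ∧ |s - t| = h := by
  obtain ⟨ht₁, ht₂⟩ := abs_le.1 ht
  rcases le_total 0 t with h0 | h0
  · exact ⟨t - h, abs_le.2 ⟨by linarith, by linarith⟩, by simp [abs_of_nonneg h_nonneg]⟩
  · exact ⟨t + h, abs_le.2 ⟨by linarith, by linarith⟩, by simp [abs_of_nonneg h_nonneg]⟩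

lemma norm_sub_sub_smul_le_of_hasDerivAt [NormedSpace ℝ E] {f f' : ℝ → E} {s t ε : ℝ}
    (hf : ∀ u, HasDerivAt f (f' u) u) (hε : ∀ u, |u - t| ≤ |s - t| → ‖f' u - f' t‖ ≤ ε) :
    ‖f s - f t - (s - t) • f' t‖ ≤ ε * |s - t| := by
  have hderiv : ∀ u ∈ Set.uIcc t s,
      HasDerivWithinAt (fun u ↦ f u - u • f' t) (f' u - f' t) (Set.uIcc t s) u := fun u _ ↦ by
    simpa using ((hf u).fun_sub ((hasDerivAt_id u).smul_const (f' t))).hasDerivWithinAt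
  have := (convex_uIcc t s).norm_image_sub_le_of_norm_hasDerivWithin_le hderiv
    (fun u hu ↦ hε u (Set.abs_sub_left_of_mem_uIcc hu)) Set.left_mem_uIcc Set.right_mem_uIcc
  rwa [sub_sub_sub_comm, ← sub_smul] at this

lemma UniformlyVanishing.of_hasDerivAt [NormedSpace ℝ E] {F' : ι → ℝ → E}
    (hF : UniformlyVanishing l a F) (ha : Tendsto a l atTop)
    (hderiv : ∀ n t, HasDerivAt (F n) (F' n t) t) (hF' : AsymptoticallyEquicontinuous l F') :
    UniformlyVanishing l a F' := by
  intro ε hε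
  obtain ⟨h, h_pos, hF'⟩ := hF' (ε / 2) (half_pos hε)
  filter_upwards [hF', hF (ε * h / 4) (by positivity), ha.eventually_ge_atTop h]
    with n hF'n hFn han t ht
  obtain ⟨s, hs, hst⟩ := exists_abs_le_abs_sub_eq h_pos.le han ht
  have hlin : ‖F n s - F n t - (s - t) • F' n t‖ ≤ ε / 2 * h := hst ▸
    norm_sub_sub_smul_le_of_hasDerivAt (hderiv n) fun u hu ↦ hF'n u t (hu.trans hst.le)
  have hslope : h * ‖F' n t‖ ≤ h * ε := calc
    h * ‖F' n t‖ = ‖(F n s - F n t) - (F n s - F n t - (s - t) • F' n t)‖ := by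
      rw [sub_sub_cancel, norm_smul, Real.norm_eq_abs, hst]
    _ ≤ ‖F n s‖ + ‖F n t‖ + ‖F n s - F n t - (s - t) • F' n t‖ :=
      (norm_sub_le _ _).trans (by gcongr; exact norm_sub_le _ _)
    _ ≤ h * ε := by linarith [hFn s hs, hFn t ht]
  exact le_of_mul_le_mul_left hslope h_pos

end UniformlyVanishing

section CharFun

lemma hasDerivAt_iteratedDeriv_charFun {μ : Measure ℝ} [IsFiniteMeasure μ] {p j : ℕ}
    (hμ : MemLp id p μ) (hj : j < p) (t : ℝ) :
    HasDerivAt (iteratedDeriv j (charFun μ)) (iteratedDeriv (j + 1) (charFun μ) t) t := by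
  rw [iteratedDeriv_succ]
  exact ((contDiff_charFun hμ).differentiable_iteratedDeriv j (mod_cast hj) t).hasDerivAt

lemma norm_cexp_mul_I_sub_le (s t x : ℝ) :
    ‖Complex.exp (s * x * Complex.I) - Complex.exp (t * x * Complex.I)‖ ≤ |s - t| * |x| := by
  have h : Complex.exp (s * x * Complex.I) - Complex.exp (t * x * Complex.I) =
      Complex.exp ((t * x : ℝ) * Complex.I) *
        (Complex.exp (Complex.I * ((s - t) * x : ℝ)) - 1) := by
    rw [mul_sub, ← Complex.exp_add, mul_one]
    congr 2 <;> push_cast <;> ring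
  rw [h, norm_mul, Complex.norm_exp_ofReal_mul_I, one_mul, ← abs_mul]
  exact Real.norm_exp_I_mul_ofReal_sub_one_le

lemma norm_cexp_mul_I_sub_le_two (s t x : ℝ) :
    ‖Complex.exp (s * x * Complex.I) - Complex.exp (t * x * Complex.I)‖ ≤ 2 := by
  refine (norm_sub_le _ _).trans ?_
  rw [← Complex.ofReal_mul, ← Complex.ofReal_mul, Complex.norm_exp_ofReal_mul_I,
    Complex.norm_exp_ofReal_mul_I, one_add_one_eq_two]

lemma pow_le_max_pow_sub_add {x c : ℝ} (hx : 0 ≤ x) (hc : 1 ≤ c) {j p : ℕ} (hj : j ≤ p) :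
    x ^ j ≤ max (x ^ p - c) 0 + c := by
  rcases le_total x 1 with hx1 | hx1
  · linarith [pow_le_one₀ (n := j) hx hx1, le_max_right (x ^ p - c) 0]
  · linarith [pow_le_pow_right₀ hx1 hj, le_max_left (x ^ p - c) 0]

lemma norm_pow_mul_cexp_sub_le {c : ℝ} (hc : 1 ≤ c) {j p : ℕ} (hp : p ≠ 0) (hj : j ≤ p)
    (s t x : ℝ) :
    ‖(x : ℂ) ^ j * Complex.exp (s * x * Complex.I)
      - (x : ℂ) ^ j * Complex.exp (t * x * Complex.I)‖ ≤
      2 * max (|x| ^ p - c) 0 + c * |s - t| * (1 + |x| ^ p) := by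
  have hx : |x| ≤ 1 + |x| ^ p := by
    rcases le_total |x| 1 with h | h
    · linarith [pow_nonneg (abs_nonneg x) p]
    · linarith [le_self_pow₀ h hp]
  rw [← mul_sub, norm_mul, norm_pow, Complex.norm_real, Real.norm_eq_abs]
  calc |x| ^ j * ‖Complex.exp (s * x * Complex.I) - Complex.exp (t * x * Complex.I)‖
    _ ≤ (max (|x| ^ p - c) 0 + c) *
        ‖Complex.exp (s * x * Complex.I) - Complex.exp (t * x * Complex.I)‖ := by
      gcongr; exact pow_le_max_pow_sub_add (abs_nonneg x) hc hj
    _ ≤ max (|x| ^ p - c) 0 * 2 + c * (|s - t| * |x|) := by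
      rw [add_mul]
      gcongr
      · exact norm_cexp_mul_I_sub_le_two s t x
      · exact norm_cexp_mul_I_sub_le s t x
    _ ≤ 2 * max (|x| ^ p - c) 0 + c * |s - t| * (1 + |x| ^ p) := by
      rw [mul_comm _ (2 : ℝ), ← mul_assoc]
      gcongr

variable {p j : ℕ} {μ : Measure ℝ} [IsFiniteMeasure μ]

lemma integrable_max_sub {α : Type*} [MeasurableSpace α] {μ : Measure α} [IsFiniteMeasure μ]
    {f : α → ℝ} (hf : Integrable f μ) (c : ℝ) : Integrable (fun x ↦ max (f x - c) 0) μ :=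
  (hf.sub (integrable_const c)).pos_part

lemma integrable_abs_pow (hμ : MemLp id p μ) (hj : j ≤ p) : Integrable (fun x ↦ |x| ^ j) μ :=
  (hμ.mono_exponent (mod_cast hj)).integrable_norm_pow'

lemma norm_iteratedDeriv_charFun_sub_le {μ : Measure ℝ} [IsProbabilityMeasure μ] (hp : p ≠ 0)
    (hμ : MemLp id p μ) (hj : j ≤ p) {c : ℝ} (hc : 1 ≤ c) (s t : ℝ) :
    ‖iteratedDeriv j (charFun μ) s - iteratedDeriv j (charFun μ) t‖ ≤
      2 * ∫ x, max (|x| ^ p - c) 0 ∂μ + c * |s - t| * (1 + ∫ x, |x| ^ p ∂μ) := by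
  have hμj : MemLp id j μ := hμ.mono_exponent (mod_cast hj)
  have hint (u : ℝ) : Integrable (fun x : ℝ ↦ (x : ℂ) ^ j * Complex.exp (u * x * Complex.I)) μ := by
    refine (integrable_abs_pow hμ hj).mono (by fun_prop) (.of_forall fun x ↦ ?_)
    rw [norm_mul, ← Complex.ofReal_mul, Complex.norm_exp_ofReal_mul_I]
    simp
  have hpow := integrable_abs_pow hμ le_rfl
  have hexcess := (integrable_max_sub hpow c).const_mul 2
  have hlinear : Integrable (fun x ↦ c * |s - t| * (1 + |x| ^ p)) μ :=
    ((integrable_const 1).add hpow).const_mul _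
  rw [iteratedDeriv_charFun hμj, iteratedDeriv_charFun hμj, ← mul_sub, norm_mul, norm_pow,
    Complex.norm_I, one_pow, one_mul, ← integral_sub (hint s) (hint t)]
  refine (norm_integral_le_of_norm_le (hexcess.add hlinear)
    (.of_forall (norm_pow_mul_cexp_sub_le hc hp hj s t))).trans_eq ?_
  rw [integral_add' hexcess hlinear, integral_const_mul, integral_const_mul,
    integral_add (integrable_const 1) hpow]
  simp

lemma tendsto_integral_max_sub_atTop {α : Type*} [MeasurableSpace α] {μ : Measure α}
    {f : α → ℝ} (hf : Integrable f μ) :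
    Tendsto (fun c ↦ ∫ x, max (f x - c) 0 ∂μ) atTop (𝓝 0) := by
  suffices h : Tendsto (fun c ↦ ∫ x, max (f x - c) 0 ∂μ) atTop (𝓝 (∫ _, (0 : ℝ) ∂μ)) by
    simpa using h
  refine tendsto_integral_filter_of_dominated_convergence (fun x ↦ |f x|) ?_ ?_ hf.abs ?_
  · exact .of_forall fun c ↦
      (hf.aestronglyMeasurable.sub aestronglyMeasurable_const).sup aestronglyMeasurable_const
  · filter_upwards [eventually_ge_atTop 0] with c hc
    refine .of_forall fun x ↦ ?_
    rw [Real.norm_of_nonneg (le_max_right _ _)]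
    exact max_le (by linarith [le_abs_self (f x)]) (abs_nonneg _)
  · refine .of_forall fun x ↦ tendsto_const_nhds.congr' ?_
    filter_upwards [eventually_ge_atTop (f x)] with c hc
    exact (max_eq_right (sub_nonpos.2 hc)).symm

variable {ι : Type*} {l : Filter ι}

lemma asymptoticallyEquicontinuous_iteratedDeriv_charFun {ν : ι → Measure ℝ}
    [∀ n, IsProbabilityMeasure (ν n)] (hp : p ≠ 0) (hν : ∀ n, MemLp id p (ν n))
    (hμ : MemLp id p μ) (htail : ∀ c, Tendsto (fun n ↦ ∫ x, max (|x| ^ p - c) 0 ∂(ν n)) l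
      (𝓝 (∫ x, max (|x| ^ p - c) 0 ∂μ))) (hj : j ≤ p) :
    AsymptoticallyEquicontinuous l (fun n ↦ iteratedDeriv j (charFun (ν n))) := by
  intro ε hε
  obtain ⟨c, hc, hc1⟩ := (((tendsto_integral_max_sub_atTop
    (integrable_abs_pow hμ le_rfl)).eventually (gt_mem_nhds (by positivity : 0 < ε / 4))).and
      (eventually_ge_atTop 1)).exists
  set m := ∫ x, |x| ^ p ∂μ with hm
  have hm_nonneg : 0 ≤ m := integral_nonneg fun x ↦ by positivity
  have hmoment : Tendsto (fun n ↦ ∫ x, |x| ^ p ∂(ν n)) l (𝓝 m) := by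
    simpa [hm, max_eq_left, pow_nonneg] using htail 0
  refine ⟨ε / (2 * c * (m + 2)), by positivity, ?_⟩
  filter_upwards [(htail c).eventually (gt_mem_nhds hc),
    hmoment.eventually (gt_mem_nhds (lt_add_one m))] with n htail_n hmoment_n s t hst
  calc _ ≤ 2 * ∫ x, max (|x| ^ p - c) 0 ∂(ν n) + c * |s - t| * (1 + ∫ x, |x| ^ p ∂(ν n)) :=
        norm_iteratedDeriv_charFun_sub_le hp (hν n) hj hc1 s t
    _ ≤ 2 * (ε / 4) + c * (ε / (2 * c * (m + 2))) * (1 + (m + 1)) := by gcongr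
    _ = ε := by field_simp; ring

lemma tendsto_integral_max_sub {α : Type*} [TopologicalSpace α] [MeasurableSpace α]
    [OpensMeasurableSpace α] {ν : ι → ProbabilityMeasure α} {ν' : ProbabilityMeasure α}
    (hlim : Tendsto ν l (𝓝 ν')) {f : α → ℝ} (hf : Continuous f) (hf0 : ∀ x, 0 ≤ f x)
    (hν : ∀ n, Integrable f (ν n : Measure α)) (hν' : Integrable f (ν' : Measure α))
    (hint : Tendsto (fun n ↦ ∫ x, f x ∂(ν n : Measure α)) l (𝓝 (∫ x, f x ∂(ν' : Measure α))))
    (c : ℝ) :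
    Tendsto (fun n ↦ ∫ x, max (f x - c) 0 ∂(ν n : Measure α)) l
      (𝓝 (∫ x, max (f x - c) 0 ∂(ν' : Measure α))) := by
  have hbound (x : α) : ‖min (f x) c‖ ≤ |c| :=
    abs_le.2 ⟨le_min ((neg_nonpos.2 (abs_nonneg c)).trans (hf0 x)) (neg_abs_le c),
      (min_le_right _ _).trans (le_abs_self c)⟩
  have hmin := ProbabilityMeasure.tendsto_iff_forall_integral_tendsto.1 hlim
    (BoundedContinuousFunction.ofNormedAddCommGroup (fun x ↦ min (f x) c) (by fun_prop) |c| hbound)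
  have hsplit (ρ : ProbabilityMeasure α) (hρ : Integrable f (ρ : Measure α)) :
      ∫ x, max (f x - c) 0 ∂(ρ : Measure α) =
        ∫ x, f x ∂(ρ : Measure α) - ∫ x, min (f x) c ∂(ρ : Measure α) := by
    have hmin_int : Integrable (fun x ↦ min (f x) c) (ρ : Measure α) :=
      hρ.inf (integrable_const c)
    rw [← integral_sub hρ hmin_int]
    refine integral_congr_ae (.of_forall fun x ↦ ?_)
    rcases le_total (f x) c with h | h <;> simp [h]
  rw [hsplit ν' hν']
  exact (hint.sub hmin).congr fun n ↦ (hsplit (ν n) (hν n)).symm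

theorem uniformlyVanishing_iteratedDeriv_charFun_sub {ν : ℕ → ProbabilityMeasure ℝ}
    {ν' : ProbabilityMeasure ℝ} {a : ℕ → ℝ} {C : ℝ} (hp : p ≠ 0)
    (hlim : Tendsto ν atTop (𝓝 ν')) (hν : ∀ n, MemLp id p (ν n : Measure ℝ))
    (hν' : MemLp id p (ν' : Measure ℝ))
    (hmoment : Tendsto (fun n ↦ ∫ x, |x| ^ p ∂(ν n : Measure ℝ)) atTop
      (𝓝 (∫ x, |x| ^ p ∂(ν' : Measure ℝ))))
    (ha : Tendsto a atTop atTop)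
    (hdecay : ∀ n t, |t| ≤ a n → |t| * ‖charFun (ν n : Measure ℝ) t‖ ≤ C) (hj : j ≤ p) :
    UniformlyVanishing atTop a (fun n t ↦ iteratedDeriv j (charFun (ν n : Measure ℝ)) t -
      iteratedDeriv j (charFun (ν' : Measure ℝ)) t) := by
  have hequi {i : ℕ} (hi : i ≤ p) : AsymptoticallyEquicontinuous atTop
      (fun n t ↦ iteratedDeriv i (charFun (ν n : Measure ℝ)) t -
        iteratedDeriv i (charFun (ν' : Measure ℝ)) t) :=
    (asymptoticallyEquicontinuous_iteratedDeriv_charFun hp hν hν'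
      (tendsto_integral_max_sub hlim (by fun_prop) (fun x ↦ by positivity)
        (fun n ↦ integrable_abs_pow (hν n) le_rfl) (integrable_abs_pow hν' le_rfl) hmoment) hi).sub
    (asymptoticallyEquicontinuous_iteratedDeriv_charFun hp (fun _ ↦ hν') hν'
      (fun c ↦ tendsto_const_nhds) hi)
  induction j with
  | zero =>
    have hchar := ProbabilityMeasure.tendsto_iff_tendsto_charFun.1 hlim
    have hdecay' (t : ℝ) : |t| * ‖charFun (ν' : Measure ℝ) t‖ ≤ C :=
      le_of_tendsto ((hchar t).norm.const_mul |t|) <| by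
        filter_upwards [ha.eventually_ge_atTop |t|] with n hn using hdecay n t hn
    simp only [iteratedDeriv_zero] at hequi ⊢
    refine .of_forall_const (C := C + C) (fun K ↦ ?_) (.of_forall fun n t ht ↦ ?_)
    · exact (hequi (Nat.zero_le p)).uniformlyVanishing_const
        (fun t ↦ tendsto_sub_nhds_zero_iff.2 (hchar t)) K
    · calc |t| * ‖charFun (ν n : Measure ℝ) t - charFun (ν' : Measure ℝ) t‖
        _ ≤ |t| * (‖charFun (ν n : Measure ℝ) t‖ + ‖charFun (ν' : Measure ℝ) t‖) := by
          gcongr; exact norm_sub_le _ _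
        _ ≤ C + C := by rw [mul_add]; exact add_le_add (hdecay n t ht) (hdecay' t)
  | succ j ih =>
    exact (ih (Nat.le_of_succ_le hj)).of_hasDerivAt ha (fun n t ↦
      (hasDerivAt_iteratedDeriv_charFun (hν n) hj t).sub
        (hasDerivAt_iteratedDeriv_charFun hν' hj t)) (hequi hj)

end CharFun

section Symmetrization

/-- The law of `ε X` for `X` of law `μ` and an independent fair sign `ε`. It remembers exactly the
law of `|X|`, and its characteristic function is the real part of that of `X`. -/
noncomputable def symmetrization (μ : Measure ℝ) : Measure ℝ :=
  (2⁻¹ : ℝ≥0∞) • (μ + μ.map Neg.neg)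

variable {μ : Measure ℝ}

instance [IsProbabilityMeasure μ] : IsProbabilityMeasure (symmetrization μ) where
  measure_univ := by
    have := Measure.isProbabilityMeasure_map (μ := μ) (measurable_neg (G := ℝ)).aemeasurable
    simp [symmetrization, ENNReal.inv_two_add_inv_two]

lemma charFun_symmetrization [IsFiniteMeasure μ] (t : ℝ) :
    charFun (symmetrization μ) t = (charFun μ t).re := by
  have hint (ρ : Measure ℝ) [IsFiniteMeasure ρ] :
      Integrable (fun x : ℝ ↦ Complex.exp (t * x * Complex.I)) ρ :=
    .of_bound (by fun_prop) 1 (.of_forall fun x ↦ by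
      rw [← Complex.ofReal_mul, Complex.norm_exp_ofReal_mul_I])
  have hneg : charFun (μ.map Neg.neg) t = starRingEnd ℂ (charFun μ t) := by
    simpa [← charFun_neg] using charFun_map_mul (μ := μ) (-1) t
  rw [charFun_apply_real, symmetrization, integral_smul_measure,
    integral_add_measure (hint μ) (hint _), ← charFun_apply_real, ← charFun_apply_real, hneg,
    Complex.add_conj]
  simp

lemma map_abs_symmetrization (hμ : ∀ᵐ x ∂μ, 0 ≤ x) : (symmetrization μ).map (|·|) = μ := by
  have hfold : μ.map (|·|) = μ :=
    (Measure.map_congr (hμ.mono fun x hx ↦ abs_of_nonneg hx)).trans Measure.map_id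
  have hneg : (fun x : ℝ ↦ |x|) ∘ Neg.neg = (|·|) := funext fun x ↦ abs_neg x
  rw [symmetrization, Measure.map_smul, Measure.map_add _ _ measurable_abs,
    Measure.map_map measurable_abs measurable_neg, hneg, hfold, ← two_smul ℝ≥0∞ μ, smul_smul,
    ENNReal.inv_mul_cancel two_ne_zero ENNReal.ofNat_ne_top, one_smul]

theorem tendsto_map_abs_of_tendsto_re_charFun {ν : ℕ → ProbabilityMeasure ℝ}
    {ρ : ProbabilityMeasure ℝ} (hν : ∀ n, ∀ᵐ x ∂(ν n : Measure ℝ), 0 ≤ x)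
    (hlim : ∀ t, Tendsto (fun n ↦ ((charFun (ν n : Measure ℝ) t).re : ℂ)) atTop
      (𝓝 (charFun (ρ : Measure ℝ) t))) :
    Tendsto ν atTop (𝓝 (ρ.map continuous_abs.measurable.aemeasurable)) := by
  let σ (n : ℕ) : ProbabilityMeasure ℝ := ⟨symmetrization (ν n : Measure ℝ), inferInstance⟩
  have hσ : Tendsto σ atTop (𝓝 ρ) := ProbabilityMeasure.tendsto_iff_tendsto_charFun.2 fun t ↦ by
    simpa only [σ, ProbabilityMeasure.coe_mk, charFun_symmetrization] using hlim t
  refine (ProbabilityMeasure.tendsto_map_of_tendsto_of_continuous σ ρ hσ continuous_abs).congr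
    fun n ↦ Subtype.ext ?_
  exact map_abs_symmetrization (hν n)

end Symmetrization

section Convolution

variable {μ ν : Measure ℝ}

lemma memLp_id_conv [IsFiniteMeasure μ] [IsFiniteMeasure ν] {p : ℝ≥0∞} (hμ : MemLp id p μ)
    (hν : MemLp id p ν) : MemLp id p (μ ∗ ν) := by
  rw [Measure.conv, memLp_map_measure_iff (by fun_prop) (by fun_prop)]
  exact (hμ.comp_fst ν).add (hν.comp_snd μ)

variable [IsProbabilityMeasure μ] [IsProbabilityMeasure ν]

lemma integral_id_conv (hμ : Integrable (fun x ↦ x) μ) (hν : Integrable (fun x ↦ x) ν) :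
    ∫ x, x ∂(μ ∗ ν) = ∫ x, x ∂μ + ∫ x, x ∂ν := by
  have hconv := memLp_one_iff_integrable.1
    (memLp_id_conv (memLp_one_iff_integrable.2 hμ) (memLp_one_iff_integrable.2 hν))
  have hinner (x : ℝ) : ∫ y, (x + y) ∂ν = x + ∫ y, y ∂ν := by
    rw [integral_add (integrable_const x) hν]
    simp
  rw [integral_conv (f := fun x ↦ x) hconv]
  simp only [hinner]
  rw [integral_add hμ (integrable_const _)]
  simp

lemma integral_sq_conv (hμ : MemLp id 2 μ) (hν : MemLp id 2 ν) :
    ∫ x, x ^ 2 ∂(μ ∗ ν) =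
      ∫ x, x ^ 2 ∂μ + 2 * (∫ x, x ∂μ) * (∫ x, x ∂ν) + ∫ x, x ^ 2 ∂ν := by
  have hμ1 : Integrable (fun x ↦ x) μ := hμ.integrable one_le_two
  have hν1 : Integrable (fun x ↦ x) ν := hν.integrable one_le_two
  have hμ2 : Integrable (fun x ↦ x ^ 2) μ := hμ.integrable_sq
  have hν2 : Integrable (fun x ↦ x ^ 2) ν := hν.integrable_sq
  have hinner (x : ℝ) :
      ∫ y, (x + y) ^ 2 ∂ν = x ^ 2 + 2 * (∫ y, y ∂ν) * x + ∫ y, y ^ 2 ∂ν := by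
    have hlinear : Integrable (fun y ↦ x ^ 2 + 2 * x * y) ν :=
      (integrable_const _).add (hν1.const_mul _)
    simp only [add_sq]
    rw [integral_add hlinear hν2, integral_add (integrable_const _) (hν1.const_mul _),
      integral_const_mul]
    simp only [integral_const, probReal_univ, one_smul]
    ring
  have hquadratic : Integrable (fun x ↦ x ^ 2 + 2 * (∫ y, y ∂ν) * x) μ :=
    hμ2.add (hμ1.const_mul _)
  rw [integral_conv (f := (· ^ 2)) (memLp_id_conv hμ hν).integrable_sq]
  simp only [hinner]
  rw [integral_add hquadratic (integrable_const _), integral_add hμ2 (hμ1.const_mul _),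
    integral_const_mul]
  simp only [integral_const, probReal_univ, one_smul]
  ring

end Convolution

section PosPart

variable {ν : Measure ℝ}

lemma memLp_id_map_max_zero {p : ℝ≥0∞} (hν : MemLp id p ν) : MemLp id p (ν.map (max · 0)) := by
  rw [memLp_map_measure_iff (by fun_prop) (by fun_prop)]
  exact hν.pos_part

lemma integral_id_map_max_zero (hν : Integrable (fun x ↦ x) ν) :
    ∫ x, x ∂(ν.map (max · 0)) = ∫ x, x ∂ν + ∫ x, max (-x) 0 ∂ν := by
  rw [integral_map (by fun_prop) (by fun_prop), ← integral_add hν hν.neg_part]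
  refine integral_congr_ae (.of_forall fun x ↦ ?_)
  rcases le_total x 0 with h | h <;> simp [h]

lemma integral_sq_map_max_zero (hν : MemLp id 2 ν) :
    ∫ x, x ^ 2 ∂(ν.map (max · 0)) = ∫ x, x ^ 2 ∂ν - ∫ x, (max (-x) 0) ^ 2 ∂ν := by
  have hsq : Integrable (fun x ↦ x ^ 2) ν := hν.integrable_sq
  have hneg : Integrable (fun x ↦ (max (-x) 0) ^ 2) ν := hν.neg_part.integrable_sq
  rw [integral_map (by fun_prop) (by fun_prop), ← integral_sub hsq hneg]
  refine integral_congr_ae (.of_forall fun x ↦ ?_)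
  rcases le_total x 0 with h | h <;> simp [h]

variable [IsFiniteMeasure ν]

lemma charFun_map_max_zero_sub (θ : ℝ) :
    charFun (ν.map (max · 0)) θ - charFun ν θ =
      ∫ x, (Complex.exp (θ * (max x 0 : ℝ) * Complex.I) - Complex.exp (θ * x * Complex.I)) ∂ν := by
  have hint {f : ℝ → ℝ} (hf : Measurable f) :
      Integrable (fun x ↦ Complex.exp (θ * f x * Complex.I)) ν :=
    .of_bound (by fun_prop) 1 (.of_forall fun x ↦ by
      rw [← Complex.ofReal_mul, Complex.norm_exp_ofReal_mul_I])
  rw [charFun_apply_real, charFun_apply_real, integral_map (by fun_prop) (by fun_prop),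
    integral_sub (hint (by fun_prop)) (hint (f := fun x ↦ x) (by fun_prop))]

lemma norm_charFun_map_max_zero_sub_le (hν : Integrable (fun x ↦ x) ν) (θ : ℝ) :
    ‖charFun (ν.map (max · 0)) θ - charFun ν θ‖ ≤ |θ| * ∫ x, max (-x) 0 ∂ν := by
  rw [charFun_map_max_zero_sub, ← integral_const_mul]
  refine norm_integral_le_of_norm_le (hν.neg_part.const_mul _) (.of_forall fun x ↦ ?_)
  rcases le_total x 0 with hx | hx
  · simpa [hx, abs_of_nonpos] using norm_cexp_mul_I_sub_le 0 θ x
  · simp [hx]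

-- Truncation moves mass from `x < 0` to `0`, where the cosine is flat: the real part changes only
-- to second order.
lemma abs_re_charFun_map_max_zero_sub_le (hν : MemLp id 2 ν) (θ : ℝ) :
    |(charFun (ν.map (max · 0)) θ).re - (charFun ν θ).re| ≤
      θ ^ 2 / 2 * ∫ x, (max (-x) 0) ^ 2 ∂ν := by
  have hneg : Integrable (fun x ↦ (max (-x) 0) ^ 2) ν := hν.neg_part.integrable_sq
  have hint : Integrable (fun x : ℝ ↦ Complex.exp (θ * (max x 0 : ℝ) * Complex.I)
      - Complex.exp (θ * x * Complex.I)) ν := by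
    refine .of_bound (by fun_prop) 2 (.of_forall fun x ↦ (norm_sub_le _ _).trans ?_)
    rw [← Complex.ofReal_mul, ← Complex.ofReal_mul, Complex.norm_exp_ofReal_mul_I,
      Complex.norm_exp_ofReal_mul_I, one_add_one_eq_two]
  rw [← Complex.sub_re, charFun_map_max_zero_sub, ← RCLike.re_eq_complex_re, ← integral_re hint,
    ← integral_const_mul, ← Real.norm_eq_abs]
  refine norm_integral_le_of_norm_le (hneg.const_mul _) (.of_forall fun x ↦ ?_)
  rcases le_total x 0 with hx | hx
  · have hre : (Complex.exp (θ * (max x 0 : ℝ) * Complex.I)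
        - Complex.exp (θ * x * Complex.I)).re = 1 - Real.cos (θ * x) := by
      simp [hx, ← Complex.ofReal_mul, Complex.exp_ofReal_mul_I_re]
    rw [RCLike.re_eq_complex_re, hre, Real.norm_of_nonneg (by linarith [Real.cos_le_one (θ * x)]),
      max_eq_left (neg_nonneg.2 hx)]
    linarith [Real.one_sub_sq_div_two_le_cos (x := θ * x)]
  · simp only [hx, sup_of_le_left, sub_self, map_zero, norm_zero]
    positivity

end PosPart

section Lindley

variable (μ : Measure ℝ) (n : ℕ)

/-- The law of `max_{0 ≤ k ≤ n} S_k` for a random walk `S` with step law `μ`, given by Lindley's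
recursion `M_{n+1} = (X + M_n)⁺` with `X` of law `μ` independent of `M_n`. -/
noncomputable def lindleyLaw : ℕ → Measure ℝ
  | 0 => Measure.dirac 0
  | n + 1 => (μ ∗ lindleyLaw n).map (max · 0)

/-- The law of `max_{1 ≤ k ≤ n + 1} S_k` for a random walk `S` with step law `μ`: the first step
plus the maximum over the remaining `n` steps. -/
noncomputable def walkMaxLaw : Measure ℝ := μ ∗ lindleyLaw μ n

/-- The mean `E (X + M_n)⁻` of what the truncation in Lindley's recursion cuts off. -/
noncomputable def undershootMean : ℝ := ∫ x, max (-x) 0 ∂(walkMaxLaw μ n)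

/-- The second moment `E ((X + M_n)⁻)²` of what the truncation in Lindley's recursion cuts off. -/
noncomputable def undershootSqMean : ℝ := ∫ x, (max (-x) 0) ^ 2 ∂(walkMaxLaw μ n)

lemma lindleyLaw_succ : lindleyLaw μ (n + 1) = (walkMaxLaw μ n).map (max · 0) := rfl

lemma undershootMean_nonneg : 0 ≤ undershootMean μ n :=
  integral_nonneg fun _ ↦ le_max_right _ _

lemma undershootSqMean_nonneg : 0 ≤ undershootSqMean μ n :=
  integral_nonneg fun _ ↦ sq_nonneg _

lemma ae_nonneg_lindleyLaw : ∀ᵐ x ∂(lindleyLaw μ n), 0 ≤ x := by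
  cases n with
  | zero => simp [lindleyLaw]
  | succ n =>
    rw [lindleyLaw_succ, ae_map_iff (by fun_prop) measurableSet_Ici]
    exact .of_forall fun x ↦ le_max_right x 0

variable [IsProbabilityMeasure μ]

instance : IsProbabilityMeasure (lindleyLaw μ n) := by
  induction n with
  | zero => rw [lindleyLaw]; infer_instance
  | succ n ih => exact Measure.isProbabilityMeasure_map (by fun_prop)

instance : IsProbabilityMeasure (walkMaxLaw μ n) := by
  rw [walkMaxLaw]; infer_instance

variable {μ}

lemma memLp_id_lindleyLaw {p : ℝ≥0∞} (hμ : MemLp id p μ) : MemLp id p (lindleyLaw μ n) := by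
  induction n with
  | zero => exact (memLp_const (0 : ℝ)).ae_eq (by simp [lindleyLaw, EventuallyEq])
  | succ n ih => exact memLp_id_map_max_zero (memLp_id_conv hμ ih)

lemma memLp_id_walkMaxLaw {p : ℝ≥0∞} (hμ : MemLp id p μ) : MemLp id p (walkMaxLaw μ n) :=
  memLp_id_conv hμ (memLp_id_lindleyLaw n hμ)

lemma integrable_id_lindleyLaw (hμ : Integrable (fun x ↦ x) μ) :
    Integrable (fun x ↦ x) (lindleyLaw μ n) :=
  memLp_one_iff_integrable.1 (memLp_id_lindleyLaw n (memLp_one_iff_integrable.2 hμ))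

lemma integrable_id_walkMaxLaw (hμ : Integrable (fun x ↦ x) μ) :
    Integrable (fun x ↦ x) (walkMaxLaw μ n) :=
  memLp_one_iff_integrable.1 (memLp_id_walkMaxLaw n (memLp_one_iff_integrable.2 hμ))

lemma integral_id_lindleyLaw (hμ : Integrable (fun x ↦ x) μ) (hmean : ∫ x, x ∂μ = 0) :
    ∫ x, x ∂(lindleyLaw μ n) = ∑ k ∈ Finset.range n, undershootMean μ k := by
  induction n with
  | zero => simp [lindleyLaw]
  | succ n ih =>
    rw [lindleyLaw_succ, integral_id_map_max_zero (integrable_id_walkMaxLaw n hμ), walkMaxLaw,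
      integral_id_conv hμ (integrable_id_lindleyLaw n hμ), hmean, zero_add, ih,
      Finset.sum_range_succ, undershootMean, walkMaxLaw]

lemma integral_sq_walkMaxLaw (hμ : MemLp id 2 μ) (hmean : ∫ x, x ∂μ = 0) :
    ∫ x, x ^ 2 ∂(walkMaxLaw μ n) = ∫ x, x ^ 2 ∂μ + ∫ x, x ^ 2 ∂(lindleyLaw μ n) := by
  rw [walkMaxLaw, integral_sq_conv hμ (memLp_id_lindleyLaw n hμ), hmean, mul_zero, zero_mul,
    add_zero]

lemma integral_sq_lindleyLaw (hμ : MemLp id 2 μ) (hmean : ∫ x, x ∂μ = 0) :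
    ∫ x, x ^ 2 ∂(lindleyLaw μ n) =
      n * ∫ x, x ^ 2 ∂μ - ∑ k ∈ Finset.range n, undershootSqMean μ k := by
  induction n with
  | zero => simp [lindleyLaw]
  | succ n ih =>
    rw [lindleyLaw_succ, integral_sq_map_max_zero (memLp_id_walkMaxLaw n hμ),
      integral_sq_walkMaxLaw n hμ hmean, ih, Finset.sum_range_succ, undershootSqMean]
    push_cast
    ring

lemma lintegral_lindleyLaw_succ_le {f : ℝ → ℝ≥0∞} (hf : Antitone f) :
    ∫⁻ x, f x ∂(lindleyLaw μ (n + 1)) ≤ ∫⁻ x, f x ∂(lindleyLaw μ n) := by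
  induction n generalizing f with
  | zero =>
    calc ∫⁻ x, f x ∂(lindleyLaw μ (0 + 1)) ≤ ∫⁻ _, f 0 ∂(lindleyLaw μ (0 + 1)) :=
          lintegral_mono_ae <| (ae_nonneg_lindleyLaw μ _).mono fun x hx ↦ hf hx
      _ = ∫⁻ x, f x ∂(lindleyLaw μ 0) := by
        rw [lintegral_const, measure_univ, mul_one, lindleyLaw, lintegral_dirac' _ hf.measurable]
  | succ n ih =>
    have hcomp (x : ℝ) : Antitone fun y ↦ f (max (x + y) 0) := fun y z hyz ↦ by
      apply hf; gcongr
    have hmeas : Measurable fun x ↦ f (max x 0) := hf.measurable.comp (by fun_prop)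
    have hlintegral (m : ℕ) : ∫⁻ x, f x ∂(lindleyLaw μ (m + 1)) =
        ∫⁻ x, ∫⁻ y, f (max (x + y) 0) ∂(lindleyLaw μ m) ∂μ := by
      rw [lindleyLaw_succ, lintegral_map hf.measurable (by fun_prop), walkMaxLaw,
        Measure.lintegral_conv hmeas]
    rw [hlintegral, hlintegral]
    exact lintegral_mono fun x ↦ ih (hcomp x)

lemma undershootMean_antitone (hμ : Integrable (fun x ↦ x) μ) : Antitone (undershootMean μ) := by
  have hmeas : Measurable fun x : ℝ ↦ ENNReal.ofReal (max (-x) 0) := by fun_prop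
  have hlintegral (m : ℕ) : ENNReal.ofReal (undershootMean μ m) =
      ∫⁻ x, ∫⁻ y, ENNReal.ofReal (max (-(x + y)) 0) ∂(lindleyLaw μ m) ∂μ := by
    rw [undershootMean, ofReal_integral_eq_lintegral_ofReal
      (integrable_id_walkMaxLaw m hμ).neg_part (.of_forall fun _ ↦ le_max_right _ _), walkMaxLaw,
      Measure.lintegral_conv hmeas]
  refine antitone_nat_of_succ_le fun n ↦ ?_
  rw [← ENNReal.ofReal_le_ofReal_iff (undershootMean_nonneg μ n), hlintegral, hlintegral]
  refine lintegral_mono fun x ↦ lintegral_lindleyLaw_succ_le n fun y z hyz ↦ ?_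
  gcongr

lemma undershootMean_le (hμ : MemLp id 2 μ) (hmean : ∫ x, x ∂μ = 0) :
    undershootMean μ n ≤ √((∫ x, x ^ 2 ∂μ) / (n + 1)) := by
  have hμ1 : Integrable (fun x ↦ x) μ := hμ.integrable one_le_two
  set m := ∫ x, x ∂(lindleyLaw μ (n + 1)) with hm
  have hle_mean : (n + 1) * undershootMean μ n ≤ m := by
    rw [hm, integral_id_lindleyLaw _ hμ1 hmean]
    simpa using Finset.card_nsmul_le_sum (Finset.range (n + 1)) _ (undershootMean μ n)
      fun k hk ↦ undershootMean_antitone hμ1 (Finset.mem_range_succ_iff.1 hk)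
  have hmean_sq : m ^ 2 ≤ (n + 1) * ∫ x, x ^ 2 ∂μ := calc
    m ^ 2 ≤ ∫ x, x ^ 2 ∂(lindleyLaw μ (n + 1)) := by
      have := variance_nonneg id (lindleyLaw μ (n + 1))
      rw [variance_eq_sub (memLp_id_lindleyLaw _ hμ)] at this
      simpa [hm] using this
    _ ≤ (n + 1) * ∫ x, x ^ 2 ∂μ := by
      rw [integral_sq_lindleyLaw _ hμ hmean]
      push_cast
      linarith [Finset.sum_nonneg fun k (_ : k ∈ Finset.range (n + 1)) ↦
        undershootSqMean_nonneg μ k]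
  refine Real.le_sqrt_of_sq_le ((le_div_iff₀ (by positivity)).2 ?_)
  have hn : (0 : ℝ) < n + 1 := by positivity
  have := (pow_le_pow_left₀ (mul_nonneg hn.le (undershootMean_nonneg μ n)) hle_mean 2).trans
    hmean_sq
  exact le_of_mul_le_mul_left (by linarith) hn

lemma tendsto_undershootMean (hμ : MemLp id 2 μ) (hmean : ∫ x, x ∂μ = 0) :
    Tendsto (undershootMean μ) atTop (𝓝 0) := by
  refine squeeze_zero (undershootMean_nonneg μ) (fun n ↦ undershootMean_le n hμ hmean) ?_
  simpa using (tendsto_const_nhds.div_atTop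
    (tendsto_atTop_add_const_right _ (1 : ℝ) tendsto_natCast_atTop_atTop)).sqrt

lemma sq_max_neg_add_zero_le {x y A : ℝ} (hy : 0 ≤ y) (hA : 0 ≤ A) :
    (max (-(x + y)) 0) ^ 2 ≤ A * max (-(x + y)) 0 + max (x ^ 2 - A ^ 2) 0 := by
  set z := max (-(x + y)) 0
  have hz : 0 ≤ z := le_max_right _ _
  have hzx : z ≤ |x| := max_le (by linarith [neg_le_abs x]) (abs_nonneg x)
  rcases le_total z A with hzA | hzA
  · nlinarith [le_max_right (x ^ 2 - A ^ 2) 0]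
  · nlinarith [le_max_left (x ^ 2 - A ^ 2) 0, sq_abs x]

lemma undershootSqMean_le (hμ : MemLp id 2 μ) {A : ℝ} (hA : 0 ≤ A) :
    undershootSqMean μ n ≤ A * undershootMean μ n + ∫ x, max (x ^ 2 - A ^ 2) 0 ∂μ := by
  have hmap {f : ℝ → ℝ} (hf : Measurable f) : ∫ x, f x ∂(walkMaxLaw μ n) =
      ∫ p, f (p.1 + p.2) ∂(μ.prod (lindleyLaw μ n)) := by
    rw [walkMaxLaw, Measure.conv, integral_map (by fun_prop) hf.aestronglyMeasurable]
  have hsum : MemLp (fun p : ℝ × ℝ ↦ p.1 + p.2) 2 (μ.prod (lindleyLaw μ n)) :=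
    (hμ.comp_fst _).add ((memLp_id_lindleyLaw n hμ).comp_snd μ)
  have hneg : Integrable (fun p : ℝ × ℝ ↦ A * max (-(p.1 + p.2)) 0) (μ.prod (lindleyLaw μ n)) :=
    (hsum.integrable one_le_two).neg_part.const_mul A
  have htail : Integrable (fun p : ℝ × ℝ ↦ max (p.1 ^ 2 - A ^ 2) 0) (μ.prod (lindleyLaw μ n)) :=
    (integrable_max_sub hμ.integrable_sq (A ^ 2)).comp_fst _
  have hnonneg : ∀ᵐ p ∂(μ.prod (lindleyLaw μ n)), 0 ≤ p.2 :=
    Measure.quasiMeasurePreserving_snd.ae (ae_nonneg_lindleyLaw μ n)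
  rw [undershootSqMean, undershootMean, hmap (by fun_prop), hmap (by fun_prop)]
  calc _ ≤ ∫ p, (A * max (-(p.1 + p.2)) 0 + max (p.1 ^ 2 - A ^ 2) 0) ∂(μ.prod (lindleyLaw μ n)) :=
        integral_mono_ae hsum.neg_part.integrable_sq (hneg.add htail)
          (hnonneg.mono fun p hp ↦ sq_max_neg_add_zero_le hp hA)
    _ = _ := by
      rw [integral_add hneg htail, integral_const_mul,
        integral_fun_fst (fun x ↦ max (x ^ 2 - A ^ 2) 0)]
      simp

lemma tendsto_undershootSqMean (hμ : MemLp id 2 μ) (hmean : ∫ x, x ∂μ = 0) :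
    Tendsto (undershootSqMean μ) atTop (𝓝 0) := by
  refine tendsto_order.2 ⟨fun b hb ↦ .of_forall fun n ↦ hb.trans_le (undershootSqMean_nonneg μ n),
    fun ε hε ↦ ?_⟩
  obtain ⟨A, htail, hA⟩ := ((((tendsto_integral_max_sub_atTop hμ.integrable_sq).comp
    (tendsto_pow_atTop two_ne_zero)).eventually (gt_mem_nhds (half_pos hε))).and
      (eventually_ge_atTop 0)).exists
  have hmul : Tendsto (fun n ↦ A * undershootMean μ n) atTop (𝓝 0) := by
    simpa using (tendsto_undershootMean hμ hmean).const_mul A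
  filter_upwards [hmul.eventually (gt_mem_nhds (half_pos hε))] with n hn
  have := undershootSqMean_le n hμ hA
  simp only [Function.comp_apply, id_eq] at htail
  linarith

end Lindley

section Decay

variable {μ : Measure ℝ} [IsProbabilityMeasure μ] {θ : ℝ}

lemma isLittleO_charFun_sub (hmean : ∫ x, x ∂μ = 0) (hvar : ∫ x, x ^ 2 ∂μ = 1) :
    (fun θ ↦ charFun μ θ - (1 - θ ^ 2 / 2 : ℝ)) =o[𝓝 0] fun θ ↦ θ ^ 2 := by
  simpa using taylor_charFun_two (P := μ) (X := id) aemeasurable_id (by simpa) (by simpa)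

lemma exists_forall_norm_charFun_le (hmean : ∫ x, x ∂μ = 0) (hvar : ∫ x, x ^ 2 ∂μ = 1) :
    ∃ γ > 0, ∀ θ : ℝ, |θ| ≤ γ → ‖charFun μ θ‖ ≤ 1 - θ ^ 2 / 4 := by
  obtain ⟨δ, hδ, hbound⟩ := Metric.eventually_nhds_iff.1
    ((isLittleO_charFun_sub hmean hvar).bound (show (0 : ℝ) < 1 / 4 by norm_num))
  refine ⟨min (δ / 2) 1, by positivity, fun θ hθ ↦ ?_⟩
  have htaylor : ‖charFun μ θ - (1 - θ ^ 2 / 2 : ℝ)‖ ≤ 1 / 4 * θ ^ 2 := by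
    have hθδ : dist θ 0 < δ := by
      rw [Real.dist_0_eq_abs]
      linarith [hθ.trans (min_le_left _ _)]
    simpa using hbound hθδ
  have hθ_sq : θ ^ 2 ≤ 1 := (sq_le_one_iff_abs_le_one θ).2 (hθ.trans (min_le_right _ _))
  have hquad : ‖((1 - θ ^ 2 / 2 : ℝ) : ℂ)‖ = 1 - θ ^ 2 / 2 :=
    Complex.norm_of_nonneg (by linarith)
  linarith [norm_le_norm_sub_add (charFun μ θ) ((1 - θ ^ 2 / 2 : ℝ) : ℂ)]

lemma charFun_walkMaxLaw (n : ℕ) :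
    charFun (walkMaxLaw μ n) θ = charFun μ θ * charFun (lindleyLaw μ n) θ :=
  charFun_conv θ

lemma norm_charFun_lindleyLaw_succ_sub_le (hμ : Integrable (fun x ↦ x) μ) (n : ℕ) :
    ‖charFun (lindleyLaw μ (n + 1)) θ - charFun (walkMaxLaw μ n) θ‖ ≤ |θ| * undershootMean μ n :=
  norm_charFun_map_max_zero_sub_le (integrable_id_walkMaxLaw n hμ) θ

lemma abs_mul_norm_charFun_walkMaxLaw_add_le (hμ : Integrable (fun x ↦ x) μ)
    (hcharFun : ‖charFun μ θ‖ ≤ 1 - θ ^ 2 / 4) (m k : ℕ) :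
    |θ| * ‖charFun (walkMaxLaw μ (m + k)) θ‖ ≤
      |θ| * (1 - θ ^ 2 / 4) ^ (k + 1) + 4 * undershootMean μ m := by
  have hq : 0 ≤ 1 - θ ^ 2 / 4 := (norm_nonneg _).trans hcharFun
  have hr := undershootMean_nonneg μ m
  induction k with
  | zero =>
    calc |θ| * ‖charFun (walkMaxLaw μ m) θ‖ ≤ |θ| * ((1 - θ ^ 2 / 4) * 1) := by
          rw [charFun_walkMaxLaw, norm_mul]
          gcongr
          exact norm_charFun_le_one θ
      _ ≤ _ := by simpa
  | succ k ih =>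
    have hlindley : ‖charFun (lindleyLaw μ (m + k + 1)) θ‖ ≤
        ‖charFun (walkMaxLaw μ (m + k)) θ‖ + |θ| * undershootMean μ m := by
      have hanti := undershootMean_antitone hμ (Nat.le_add_right m k)
      have hsub := norm_charFun_lindleyLaw_succ_sub_le (θ := θ) hμ (m + k)
      have htri := norm_le_norm_add_norm_sub' (charFun (lindleyLaw μ (m + k + 1)) θ)
        (charFun (walkMaxLaw μ (m + k)) θ)
      linarith [mul_le_mul_of_nonneg_left hanti (abs_nonneg θ)]
    calc |θ| * ‖charFun (walkMaxLaw μ (m + k + 1)) θ‖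
        ≤ |θ| * ((1 - θ ^ 2 / 4) *
            (‖charFun (walkMaxLaw μ (m + k)) θ‖ + |θ| * undershootMean μ m)) := by
          rw [charFun_walkMaxLaw, norm_mul]
          gcongr
      _ = (1 - θ ^ 2 / 4) *
            (|θ| * ‖charFun (walkMaxLaw μ (m + k)) θ‖ + θ ^ 2 * undershootMean μ m) := by
          rw [← sq_abs θ]
          ring
      _ ≤ (1 - θ ^ 2 / 4) *
            (|θ| * (1 - θ ^ 2 / 4) ^ (k + 1) + 4 * undershootMean μ m
              + θ ^ 2 * undershootMean μ m) := by gcongr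
      _ = |θ| * (1 - θ ^ 2 / 4) ^ (k + 1 + 1) + (4 - θ ^ 4 / 4) * undershootMean μ m := by ring
      _ ≤ |θ| * (1 - θ ^ 2 / 4) ^ (k + 1 + 1) + 4 * undershootMean μ m := by
          gcongr
          linarith [show 0 ≤ θ ^ 4 by positivity]

lemma sqrt_mul_abs_mul_one_sub_pow_le (hθ : 0 ≤ 1 - θ ^ 2 / 4) (k : ℕ) :
    √k * |θ| * (1 - θ ^ 2 / 4) ^ k ≤ 1 := by
  have hexp : (1 - θ ^ 2 / 4) ^ k ≤ Real.exp (-((√k * |θ|) ^ 2 / 4)) := calc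
    (1 - θ ^ 2 / 4) ^ k ≤ Real.exp (-(θ ^ 2 / 4)) ^ k :=
      pow_le_pow_left₀ hθ (Real.one_sub_le_exp_neg _) k
    _ = Real.exp (-((√k * |θ|) ^ 2 / 4)) := by
      rw [← Real.exp_nat_mul, mul_pow, Real.sq_sqrt k.cast_nonneg, sq_abs]
      ring_nf
  have hle_exp : √k * |θ| ≤ Real.exp ((√k * |θ|) ^ 2 / 4) := by
    nlinarith [Real.add_one_le_exp ((√k * |θ|) ^ 2 / 4), sq_nonneg (√k * |θ| - 2)]
  calc √k * |θ| * (1 - θ ^ 2 / 4) ^ k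
      ≤ Real.exp ((√k * |θ|) ^ 2 / 4) * Real.exp (-((√k * |θ|) ^ 2 / 4)) := by gcongr
    _ = 1 := by rw [← Real.exp_add, add_neg_cancel, Real.exp_zero]

-- The first half of the walk makes the truncation error `O(n ^ (-1/2))`, the second half makes
-- the product of characteristic functions Gaussian small.
lemma sqrt_mul_abs_mul_norm_charFun_walkMaxLaw_le (hμ : MemLp id 2 μ) (hmean : ∫ x, x ∂μ = 0)
    (hvar : ∫ x, x ^ 2 ∂μ = 1) (hcharFun : ‖charFun μ θ‖ ≤ 1 - θ ^ 2 / 4) (n : ℕ) :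
    √(n + 1) * (|θ| * ‖charFun (walkMaxLaw μ n) θ‖) ≤ 10 := by
  obtain ⟨m, k, hn, hm, hk⟩ : ∃ m k, n = m + k ∧ n + 1 ≤ 2 * (m + 1) ∧ n + 1 ≤ 2 * (k + 1) :=
    ⟨n / 2, n - n / 2, by lia, by lia, by lia⟩
  have hsqrt {i : ℕ} (hi : n + 1 ≤ 2 * (i + 1)) : √(n + 1) ≤ 2 * √(i + 1) := by
    have hi' : (n + 1 : ℝ) ≤ 2 * (i + 1) := mod_cast hi
    rw [← Real.sqrt_sq zero_le_two, ← Real.sqrt_mul (sq_nonneg _)]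
    exact Real.sqrt_le_sqrt (by linarith)
  have hr : √(m + 1) * undershootMean μ m ≤ 1 := by
    have := undershootMean_le m hμ hmean
    rw [hvar, Real.sqrt_div zero_le_one, Real.sqrt_one, le_div_iff₀ (by positivity)] at this
    linarith
  have hq : 0 ≤ 1 - θ ^ 2 / 4 := (norm_nonneg _).trans hcharFun
  have hpow : √(k + 1) * |θ| * (1 - θ ^ 2 / 4) ^ (k + 1) ≤ 1 :=
    mod_cast sqrt_mul_abs_mul_one_sub_pow_le hq (k + 1)
  calc √(n + 1) * (|θ| * ‖charFun (walkMaxLaw μ n) θ‖)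
      ≤ √(n + 1) * (|θ| * (1 - θ ^ 2 / 4) ^ (k + 1) + 4 * undershootMean μ m) := by
        gcongr
        exact hn ▸ abs_mul_norm_charFun_walkMaxLaw_add_le (hμ.integrable one_le_two) hcharFun m k
    _ = √(n + 1) * (|θ| * (1 - θ ^ 2 / 4) ^ (k + 1)) + √(n + 1) * (4 * undershootMean μ m) :=
        mul_add _ _ _
    _ ≤ 2 * √(k + 1) * (|θ| * (1 - θ ^ 2 / 4) ^ (k + 1))
          + 2 * √(m + 1) * (4 * undershootMean μ m) := by
        gcongr
        · exact hsqrt hk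
        · exact mul_nonneg zero_le_four (undershootMean_nonneg μ m)
        · exact hsqrt hm
    _ ≤ 10 := by linarith

end Decay

section Limit

variable {μ : Measure ℝ} [IsProbabilityMeasure μ]

lemma abs_re_charFun_lindleyLaw_sub_pow_le (hμ : MemLp id 2 μ) {c : ℝ} (hc : |c| ≤ 1) (θ : ℝ)
    (n : ℕ) :
    |(charFun (lindleyLaw μ n) θ).re - c ^ n| ≤
      n * ‖charFun μ θ - c‖ + θ ^ 2 / 2 * ∑ k ∈ Finset.range n, undershootSqMean μ k := by
  induction n with
  | zero => simp [lindleyLaw]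
  | succ n ih =>
    set φ := charFun (lindleyLaw μ n) θ
    have htrunc : |(charFun (lindleyLaw μ (n + 1)) θ).re - (charFun μ θ * φ).re| ≤
        θ ^ 2 / 2 * undershootSqMean μ n := by
      rw [← charFun_walkMaxLaw]
      exact abs_re_charFun_map_max_zero_sub_le (memLp_id_walkMaxLaw n hμ) θ
    have hstep : |(charFun μ θ * φ).re - c * φ.re| ≤ ‖charFun μ θ - c‖ := calc
      |(charFun μ θ * φ).re - c * φ.re| = |((charFun μ θ - c) * φ).re| := by
        rw [sub_mul, Complex.sub_re, Complex.re_ofReal_mul]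
      _ ≤ ‖charFun μ θ - c‖ * ‖φ‖ := (Complex.abs_re_le_norm _).trans (norm_mul _ _).le
      _ ≤ ‖charFun μ θ - c‖ := mul_le_of_le_one_right (norm_nonneg _) (norm_charFun_le_one θ)
    have hih : |c * φ.re - c ^ (n + 1)| ≤ |φ.re - c ^ n| := by
      rw [pow_succ', ← mul_sub, abs_mul]
      exact mul_le_of_le_one_left (abs_nonneg _) hc
    have htri := abs_sub_le (charFun (lindleyLaw μ (n + 1)) θ).re (charFun μ θ * φ).re
      (c ^ (n + 1))
    have htri' := abs_sub_le (charFun μ θ * φ).re (c * φ.re) (c ^ (n + 1))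
    rw [Finset.sum_range_succ]
    push_cast
    linarith

lemma tendsto_inv_sqrt_mul (t : ℝ) : Tendsto (fun n : ℕ ↦ (√n)⁻¹ * t) atTop (𝓝 0) := by
  simpa using (tendsto_inv_atTop_zero.comp
    (Real.tendsto_sqrt_atTop.comp tendsto_natCast_atTop_atTop)).mul_const t

lemma inv_sqrt_mul_sq (n : ℕ) (t : ℝ) : ((√n)⁻¹ * t) ^ 2 = t ^ 2 / n := by
  rw [mul_pow, inv_pow, Real.sq_sqrt n.cast_nonneg, inv_mul_eq_div]

lemma tendsto_mul_norm_charFun_sub (hmean : ∫ x, x ∂μ = 0) (hvar : ∫ x, x ^ 2 ∂μ = 1) (t : ℝ) :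
    Tendsto (fun n : ℕ ↦ n * ‖charFun μ ((√n)⁻¹ * t) - (1 - ((√n)⁻¹ * t) ^ 2 / 2 : ℝ)‖)
      atTop (𝓝 0) := by
  have hsmall :=
    ((isLittleO_charFun_sub hmean hvar).comp_tendsto (tendsto_inv_sqrt_mul t)).norm_left
  have hsq : (fun n : ℕ ↦ ((√n)⁻¹ * t) ^ 2) =O[atTop] fun n : ℕ ↦ (n : ℝ)⁻¹ := by
    simp only [inv_sqrt_mul_sq, div_eq_mul_inv]
    exact Asymptotics.isBigO_const_mul_self _ _ _
  have := (hsmall.trans_isBigO hsq).tendsto_div_nhds_zero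
  simpa [mul_comm] using this

lemma tendsto_re_charFun_lindleyLaw (hμ : MemLp id 2 μ) (hmean : ∫ x, x ∂μ = 0)
    (hvar : ∫ x, x ^ 2 ∂μ = 1) (t : ℝ) :
    Tendsto (fun n : ℕ ↦ (charFun (lindleyLaw μ n) ((√n)⁻¹ * t)).re) atTop
      (𝓝 (Real.exp (-(t ^ 2 / 2)))) := by
  have hpow : Tendsto (fun n : ℕ ↦ (1 - ((√n)⁻¹ * t) ^ 2 / 2) ^ n) atTop
      (𝓝 (Real.exp (-(t ^ 2 / 2)))) := by
    refine (Real.tendsto_one_add_div_pow_exp (-(t ^ 2 / 2))).congr fun n ↦ ?_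
    rw [inv_sqrt_mul_sq]
    ring
  have htrunc : Tendsto (fun n : ℕ ↦ ((√n)⁻¹ * t) ^ 2 / 2 *
      ∑ k ∈ Finset.range n, undershootSqMean μ k) atTop (𝓝 0) := by
    have := (tendsto_undershootSqMean hμ hmean).cesaro.const_mul (t ^ 2 / 2)
    rw [mul_zero] at this
    refine this.congr fun n ↦ ?_
    rw [inv_sqrt_mul_sq]
    ring
  have hsmall : ∀ᶠ n : ℕ in atTop, |1 - ((√n)⁻¹ * t) ^ 2 / 2| ≤ 1 := by
    have hsq :=
      ((tendsto_inv_sqrt_mul t).pow 2).eventually (gt_mem_nhds (by norm_num : _ < (1 : ℝ)))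
    filter_upwards [hsq] with n hn
    rw [abs_le]
    constructor <;> linarith [sq_nonneg ((√n)⁻¹ * t)]
  have hdiff : Tendsto (fun n : ℕ ↦ (charFun (lindleyLaw μ n) ((√n)⁻¹ * t)).re -
      (1 - ((√n)⁻¹ * t) ^ 2 / 2) ^ n) atTop (𝓝 0) := by
    refine squeeze_zero_norm' (hsmall.mono fun n hn ↦
      abs_re_charFun_lindleyLaw_sub_pow_le hμ hn _ n) ?_
    simpa using (tendsto_mul_norm_charFun_sub hmean hvar t).add htrunc
  simpa using hdiff.add hpow

/-- The law of `|Z|` for a standard normal `Z`. -/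
noncomputable def halfNormal : ProbabilityMeasure ℝ :=
  ProbabilityMeasure.map ⟨gaussianReal 0 1, inferInstance⟩ continuous_abs.measurable.aemeasurable

/-- The law of `max_{0 ≤ k ≤ n} S_k / √n` for a random walk `S` with step law `μ`. -/
noncomputable def scaledLindleyLaw (μ : Measure ℝ) [IsProbabilityMeasure μ] (n : ℕ) :
    ProbabilityMeasure ℝ :=
  ⟨(lindleyLaw μ n).map ((√n)⁻¹ * ·), Measure.isProbabilityMeasure_map (by fun_prop)⟩

/-- The law of `max_{1 ≤ k ≤ n + 1} S_k / √(n + 1)` for a random walk `S` with step law `μ`. -/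
noncomputable def scaledWalkMaxLaw (μ : Measure ℝ) [IsProbabilityMeasure μ] (n : ℕ) :
    ProbabilityMeasure ℝ :=
  ⟨(walkMaxLaw μ n).map ((√(n + 1))⁻¹ * ·), Measure.isProbabilityMeasure_map (by fun_prop)⟩

lemma coe_halfNormal : (halfNormal : Measure ℝ) = (gaussianReal 0 1).map (|·|) := rfl

lemma memLp_id_halfNormal : MemLp id 2 (halfNormal : Measure ℝ) := by
  rw [coe_halfNormal, memLp_map_measure_iff (by fun_prop) (by fun_prop)]
  exact (memLp_id_gaussianReal 2).abs

lemma integral_sq_halfNormal : ∫ x, x ^ 2 ∂(halfNormal : Measure ℝ) = 1 := by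
  rw [coe_halfNormal, integral_map (by fun_prop) (by fun_prop)]
  have := variance_eq_integral (μ := gaussianReal 0 1) (X := id) aemeasurable_id
  simpa [eq_comm] using this

lemma charFun_scaledWalkMaxLaw (n : ℕ) (t : ℝ) :
    charFun (scaledWalkMaxLaw μ n : Measure ℝ) t =
      charFun (walkMaxLaw μ n) ((√(n + 1))⁻¹ * t) :=
  charFun_map_mul _ _

lemma memLp_id_scaledWalkMaxLaw (hμ : MemLp id 2 μ) (n : ℕ) :
    MemLp id 2 (scaledWalkMaxLaw μ n : Measure ℝ) := by
  rw [scaledWalkMaxLaw, ProbabilityMeasure.coe_mk,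
    memLp_map_measure_iff (by fun_prop) (by fun_prop)]
  exact (memLp_id_walkMaxLaw n hμ).const_mul _

theorem tendsto_scaledLindleyLaw (hμ : MemLp id 2 μ) (hmean : ∫ x, x ∂μ = 0)
    (hvar : ∫ x, x ^ 2 ∂μ = 1) : Tendsto (scaledLindleyLaw μ) atTop (𝓝 halfNormal) := by
  refine tendsto_map_abs_of_tendsto_re_charFun (fun n ↦ ?_) fun t ↦ ?_
  · rw [scaledLindleyLaw, ProbabilityMeasure.coe_mk, ae_map_iff (by fun_prop) measurableSet_Ici]
    exact (ae_nonneg_lindleyLaw μ n).mono fun x hx ↦ mul_nonneg (by positivity) hx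
  · have hlim := (Complex.continuous_ofReal.tendsto _).comp
      (tendsto_re_charFun_lindleyLaw hμ hmean hvar t)
    simpa [scaledLindleyLaw, charFun_map_mul, charFun_gaussianReal, Function.comp_def] using hlim

theorem tendsto_scaledWalkMaxLaw (hμ : MemLp id 2 μ) (hmean : ∫ x, x ∂μ = 0)
    (hvar : ∫ x, x ^ 2 ∂μ = 1) : Tendsto (scaledWalkMaxLaw μ) atTop (𝓝 halfNormal) := by
  refine ProbabilityMeasure.tendsto_iff_tendsto_charFun.2 fun t ↦ ?_
  have hlindley := (ProbabilityMeasure.tendsto_iff_tendsto_charFun.1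
    (tendsto_scaledLindleyLaw hμ hmean hvar) t).comp (tendsto_add_atTop_nat 1)
  have htrunc : Tendsto (fun n : ℕ ↦ charFun (lindleyLaw μ (n + 1)) ((√(n + 1))⁻¹ * t) -
      charFun (walkMaxLaw μ n) ((√(n + 1))⁻¹ * t)) atTop (𝓝 0) := by
    refine squeeze_zero_norm
      (fun n ↦ norm_charFun_lindleyLaw_succ_sub_le (hμ.integrable one_le_two) n) ?_
    simpa using ((tendsto_inv_sqrt_mul t).comp (tendsto_add_atTop_nat 1)).abs.mul
      (tendsto_undershootMean hμ hmean)
  simpa [scaledLindleyLaw, scaledWalkMaxLaw, charFun_map_mul] using hlindley.sub htrunc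

lemma tendsto_integral_sq_scaledWalkMaxLaw (hμ : MemLp id 2 μ) (hmean : ∫ x, x ∂μ = 0)
    (hvar : ∫ x, x ^ 2 ∂μ = 1) :
    Tendsto (fun n ↦ ∫ x, x ^ 2 ∂(scaledWalkMaxLaw μ n : Measure ℝ)) atTop (𝓝 1) := by
  have hmoment (n : ℕ) : ∫ x, x ^ 2 ∂(scaledWalkMaxLaw μ n : Measure ℝ) =
      1 - (n / (n + 1)) * ((n : ℝ)⁻¹ * ∑ k ∈ Finset.range n, undershootSqMean μ k) := by
    rw [scaledWalkMaxLaw, ProbabilityMeasure.coe_mk,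
      integral_map (by fun_prop) (by fun_prop)]
    simp only [mul_pow, inv_pow]
    rw [integral_const_mul, Real.sq_sqrt (by positivity), integral_sq_walkMaxLaw n hμ hmean,
      integral_sq_lindleyLaw n hμ hmean, hvar]
    rcases n.eq_zero_or_pos with rfl | hn
    · simp
    · field_simp
      ring
  simp only [hmoment]
  simpa using ((tendsto_natCast_div_add_atTop (1 : ℝ)).mul
    (tendsto_undershootSqMean hμ hmean).cesaro).const_sub 1

theorem exists_uniformlyVanishing_iteratedDeriv_charFun_scaledWalkMaxLaw (hμ : MemLp id 2 μ)
    (hmean : ∫ x, x ∂μ = 0) (hvar : ∫ x, x ^ 2 ∂μ = 1) :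
    ∃ γ > 0, ∀ j ≤ 2, UniformlyVanishing atTop (fun n : ℕ ↦ γ * √(n + 1)) fun n t ↦
      iteratedDeriv j (charFun (scaledWalkMaxLaw μ n : Measure ℝ)) t -
        iteratedDeriv j (charFun (halfNormal : Measure ℝ)) t := by
  obtain ⟨γ, hγ, hcharFun⟩ := exists_forall_norm_charFun_le hmean hvar
  have hdecay (n : ℕ) (t : ℝ) (ht : |t| ≤ γ * √(n + 1)) :
      |t| * ‖charFun (scaledWalkMaxLaw μ n : Measure ℝ) t‖ ≤ 10 := by
    set θ := (√(n + 1))⁻¹ * t with hθ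
    have ht_abs : |t| = √(n + 1) * |θ| := by
      rw [hθ, abs_mul, abs_inv, abs_of_nonneg (Real.sqrt_nonneg _),
        mul_inv_cancel_left₀ (by positivity)]
    have hθγ : |θ| ≤ γ := by
      rw [ht_abs, mul_comm γ] at ht
      exact le_of_mul_le_mul_left ht (by positivity)
    rw [charFun_scaledWalkMaxLaw, ht_abs, mul_assoc]
    exact sqrt_mul_abs_mul_norm_charFun_walkMaxLaw_le hμ hmean hvar (hcharFun θ hθγ) n
  have hscale : Tendsto (fun n : ℕ ↦ γ * √(n + 1)) atTop atTop :=
    (Real.tendsto_sqrt_atTop.comp (tendsto_atTop_add_const_right _ 1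
      tendsto_natCast_atTop_atTop)).const_mul_atTop hγ
  refine ⟨γ, hγ, fun j hj ↦ uniformlyVanishing_iteratedDeriv_charFun_sub two_ne_zero
    (tendsto_scaledWalkMaxLaw hμ hmean hvar) (memLp_id_scaledWalkMaxLaw hμ)
    memLp_id_halfNormal ?_ hscale hdecay hj⟩
  simpa only [sq_abs, integral_sq_halfNormal] using
    tendsto_integral_sq_scaledWalkMaxLaw hμ hmean hvar

end Limit

section RandomWalk

/-- The maximum `max_{0 ≤ k ≤ n} (x₀ + ⋯ + x_{k-1})` of the partial sums of `x`, the empty sum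
included. -/
noncomputable def maxPartialSum (x : ℕ → ℝ) (n : ℕ) : ℝ :=
  partialSups (fun k ↦ ∑ i ∈ Finset.range k, x i) n

@[fun_prop]
lemma measurable_maxPartialSum (n : ℕ) : Measurable fun x ↦ maxPartialSum x n := by
  simp only [maxPartialSum, partialSups_eq_sup'_range]
  exact Finset.measurable_range_sup'' fun k _ ↦ by fun_prop

lemma partialSups_sum_range_succ (x : ℕ → ℝ) (n : ℕ) :
    partialSups (fun k ↦ ∑ i ∈ Finset.range (k + 1), x i) n =
      x 0 + maxPartialSum (fun i ↦ x (i + 1)) n := by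
  simp only [Finset.sum_range_succ', add_comm _ (x 0), partialSups_const_add, maxPartialSum]

lemma maxPartialSum_succ (x : ℕ → ℝ) (n : ℕ) :
    maxPartialSum x (n + 1) = max (x 0 + maxPartialSum (fun i ↦ x (i + 1)) n) 0 := by
  rw [← partialSups_sum_range_succ, maxPartialSum, partialSups_add_one', max_comm]
  simp [Function.comp_def]

lemma sup'_Icc_one_sum_range (x : ℕ → ℝ) (n : ℕ) (h : (Finset.Icc 1 (n + 1)).Nonempty) :
    (Finset.Icc 1 (n + 1)).sup' h (fun k ↦ ∑ i ∈ Finset.range k, x i) =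
      x 0 + maxPartialSum (fun i ↦ x (i + 1)) n := by
  rw [← partialSups_sum_range_succ]
  refine eq_of_forall_ge_iff fun c ↦ ?_
  rw [Finset.sup'_le_iff, partialSups_le_iff]
  refine ⟨fun h k hk ↦ h (k + 1) (Finset.mem_Icc.2 ⟨k.succ_pos, by lia⟩), fun h k hk ↦ ?_⟩
  obtain ⟨hk1, hkn⟩ := Finset.mem_Icc.1 hk
  simpa [Nat.sub_add_cancel hk1] using h (k - 1) (by lia)

variable {Ω : Type*} [MeasurableSpace Ω] {P : Measure Ω}

lemma indepFun_zero_succ {β : Type*} [MeasurableSpace β] {X : ℕ → Ω → β}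
    (hX : ∀ i, Measurable (X i)) (hindep : iIndepFun X P) :
    IndepFun (X 0) (fun ω i ↦ X (i + 1) ω) P := by
  have hdisj : Indep (⨆ i ∈ ({0} : Set ℕ), MeasurableSpace.comap (X i) inferInstance)
      (⨆ i ∈ Set.Ioi 0, MeasurableSpace.comap (X i) inferInstance) P :=
    indep_iSup_of_disjoint (fun i ↦ (hX i).comap_le) hindep.iIndep (by simp)
  rw [IndepFun_iff_Indep]
  refine indep_of_indep_of_le_right (by simpa using hdisj) ?_
  rw [MeasurableSpace.pi, MeasurableSpace.comap_iSup]
  refine iSup_le fun i ↦ ?_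
  rw [MeasurableSpace.comap_comp]
  exact le_iSup₂_of_le (i + 1) i.succ_pos le_rfl

lemma integral_cexp_I_mul_eq_charFun {Y : Ω → ℝ} (hY : AEMeasurable Y P) :
    (fun s : ℝ ↦ ∫ ω, Complex.exp (Complex.I * s * (Y ω : ℝ)) ∂P) = charFun (P.map Y) := by
  funext s
  rw [charFun_apply_real, integral_map hY (by fun_prop)]
  simp only [mul_comm Complex.I, mul_right_comm _ Complex.I]

variable [IsProbabilityMeasure P] {μ : Measure ℝ} {X : ℕ → Ω → ℝ}

lemma map_add_maxPartialSum_eq_conv (hX : ∀ i, Measurable (X i)) (hindep : iIndepFun X P) (n : ℕ) :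
    P.map (fun ω ↦ X 0 ω + maxPartialSum (fun i ↦ X (i + 1) ω) n) =
      P.map (X 0) ∗ P.map (fun ω ↦ maxPartialSum (fun i ↦ X (i + 1) ω) n) :=
  ((indepFun_zero_succ hX hindep).comp measurable_id
    (measurable_maxPartialSum n)).map_add_eq_map_conv_map (hX 0) (by fun_prop)

lemma map_maxPartialSum (hX : ∀ i, Measurable (X i))
    (hindep : iIndepFun X P) (hlaw : ∀ i, P.map (X i) = μ) (n : ℕ) :
    P.map (fun ω ↦ maxPartialSum (X · ω) n) = lindleyLaw μ n := by
  induction n generalizing X with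
  | zero => simp [maxPartialSum, lindleyLaw]
  | succ n ih =>
    have htail := ih (fun i ↦ hX (i + 1)) (hindep.precomp (add_left_injective 1))
      fun i ↦ hlaw (i + 1)
    rw [lindleyLaw, ← htail, ← hlaw 0, ← map_add_maxPartialSum_eq_conv hX hindep,
      Measure.map_map (by fun_prop) (by fun_prop)]
    simp only [maxPartialSum_succ, Function.comp_def]

lemma map_add_maxPartialSum_div_sqrt [IsProbabilityMeasure μ] (hX : ∀ i, Measurable (X i))
    (hindep : iIndepFun X P) (hlaw : ∀ i, P.map (X i) = μ) (n : ℕ) :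
    P.map (fun ω ↦ (X 0 ω + maxPartialSum (fun i ↦ X (i + 1) ω) n) / √(n + 1)) =
      scaledWalkMaxLaw μ n := by
  have hwalk : P.map (fun ω ↦ X 0 ω + maxPartialSum (fun i ↦ X (i + 1) ω) n) = walkMaxLaw μ n := by
    rw [map_add_maxPartialSum_eq_conv hX hindep, hlaw 0, walkMaxLaw,
      map_maxPartialSum (fun i ↦ hX (i + 1)) (hindep.precomp (add_left_injective 1))
        fun i ↦ hlaw (i + 1)]
  rw [scaledWalkMaxLaw, ProbabilityMeasure.coe_mk, ← hwalk,
    Measure.map_map (by fun_prop) (by fun_prop)]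
  simp only [Function.comp_def, div_eq_inv_mul]

end RandomWalk

/-- Convergence, together with the first two derivatives, of the characteristic
function of `S̄ n / √n` to the characteristic function of `|Z|`, uniformly in the
range `|t| ≤ γ √n`. -/
theorem stmt12 {Ω : Type*} [MeasureSpace Ω] [IsProbabilityMeasure (ℙ : Measure Ω)]
    (X : ℕ → Ω → ℝ) (hmeas : ∀ i, Measurable (X i))
    (hindep : iIndepFun X ℙ)
    (hident : ∀ i, Measure.map (X i) ℙ = Measure.map (X 0) ℙ)
    (hL2 : MemLp (X 0) 2 ℙ)
    (hmean : ∫ ω, X 0 ω ∂ℙ = 0)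
    (hvar : ∫ ω, (X 0 ω) ^ 2 ∂ℙ = 1)
    (Sbar : ℕ → Ω → ℝ)
    (hSbar : ∀ n, ∀ hn : 1 ≤ n, ∀ ω, Sbar n ω =
      (Finset.Icc 1 n).sup' (Finset.nonempty_Icc.mpr hn)
        (fun k => ∑ i ∈ Finset.range k, X i ω)) :
    ∃ γ > (0 : ℝ), ∀ j : ℕ, j ≤ 2 → ∀ ε > (0 : ℝ), ∃ N : ℕ, ∀ n ≥ N,
      ∀ t : ℝ, |t| ≤ γ * Real.sqrt n →
        ‖iteratedDeriv j
            (fun s : ℝ => ∫ ω, Complex.exp (Complex.I * (s : ℂ)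
              * ((Sbar n ω / Real.sqrt n : ℝ) : ℂ)) ∂ℙ) t
          - iteratedDeriv j
            (fun s : ℝ => ∫ x, Complex.exp (Complex.I * (s : ℂ) * (x : ℂ))
              ∂(Measure.map (fun y => |y|) (gaussianReal 0 1))) t‖ ≤ ε := by
  set μ : Measure ℝ := Measure.map (X 0) ℙ with hμ
  have : IsProbabilityMeasure μ := Measure.isProbabilityMeasure_map (hmeas 0).aemeasurable
  have hμ_L2 : MemLp id 2 μ := (memLp_map_measure_iff (by fun_prop) (by fun_prop)).2 hL2
  have hμ_mean : ∫ x, x ∂μ = 0 := by rwa [hμ, integral_map (by fun_prop) (by fun_prop)]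
  have hμ_var : ∫ x, x ^ 2 ∂μ = 1 := by rwa [hμ, integral_map (by fun_prop) (by fun_prop)]
  have hSbar_succ (n : ℕ) (ω : Ω) :
      Sbar (n + 1) ω = X 0 ω + maxPartialSum (fun i ↦ X (i + 1) ω) n :=
    (hSbar (n + 1) n.succ_pos ω).trans (sup'_Icc_one_sum_range (X · ω) n _)
  obtain ⟨γ, hγ, hvanish⟩ :=
    exists_uniformlyVanishing_iteratedDeriv_charFun_scaledWalkMaxLaw hμ_L2 hμ_mean hμ_var
  refine ⟨γ, hγ, fun j hj ε hε ↦ ?_⟩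
  obtain ⟨N, hN⟩ := eventually_atTop.1 (hvanish j hj ε hε)
  refine ⟨N + 1, fun n hn t ht ↦ ?_⟩
  obtain ⟨m, rfl⟩ := Nat.exists_eq_add_of_le' (Nat.le_of_add_left_le hn)
  simp only [hSbar_succ, Nat.cast_add, Nat.cast_one] at ht ⊢
  rw [integral_cexp_I_mul_eq_charFun (by fun_prop), integral_cexp_I_mul_eq_charFun aemeasurable_id',
    Measure.map_id', map_add_maxPartialSum_div_sqrt hmeas hindep hident]
  exact hN m (by lia) t ht
end

section
/- Let X₁, X₂, … be i.i.d. real random variables with mean 0 and variance 1, and let S̄_n := max_{1≤k≤n} (X₁+…+X_k). Then S̄_n/√n converges in distribution to |Z| as n → ∞, where Z is standard normal (the Erdős–Kac limit theorem). -/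
open MeasureTheory ProbabilityTheory Filter
open scoped ENNReal

/-!
At its first passage of a level `a`, the walk restarts independently of its past, so that after `m`
further steps it is at or above its passage position with probability `P (0 ≤ S_m) → 1 / 2`, by the
central limit theorem. Hence `P (a ≤ S̄_n)` is asymptotically `2 P (a ≤ S_n)`, and for `a = x √n`
the central limit theorem identifies the limit as `P (x ≤ |Z|)`. Two errors are negligible on the
scale `√n`. Comparing with `S_{n + N}` rather than `S_n`, for `N` fixed and large, leaves at least
`N` steps after any passage, and the law of `S_{n + N} - S_n` does not depend on `n`. The overshoot
at the passage is at most one jump, and `n P (|X| ≥ δ √n) → 0` because `X` has finite variance.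
-/

section
open Set Topology

section WeakConvergence

variable {E ι : Type*} [LinearOrder E] [TopologicalSpace E] [OrderTopology E] [MeasurableSpace E]
  [BorelSpace E] {l : Filter ι}

lemma measureReal_Ico_eq_sub (μ : Measure E) [IsFiniteMeasure μ] {a b : E} (hab : a ≤ b) :
    μ.real (Ico a b) = μ.real (Ici a) - μ.real (Ici b) := by
  rw [← Ici_sdiff_Ici, measureReal_sdiff (Ici_subset_Ici.2 hab) measurableSet_Ici]

lemma tendsto_measureReal_Ici_of_forall_ge {μ : ι → Measure E} [∀ i, IsProbabilityMeasure (μ i)]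
    {ν : Measure E} [IsProbabilityMeasure ν] {c : E} (hν : ν (Iio c) = 0)
    (h : ∀ x ≥ c, Tendsto (fun i ↦ (μ i).real (Ici x)) l (𝓝 (ν.real (Ici x)))) (x : E) :
    Tendsto (fun i ↦ (μ i).real (Ici x)) l (𝓝 (ν.real (Ici x))) := by
  rcases le_total c x with hcx | hxc
  · exact h x hcx
  have hc : ν.real (Ici c) = 1 := by
    rw [← compl_Iio, probReal_compl_eq_one_sub measurableSet_Iio, measureReal_def, hν]
    simp
  have hx : ν.real (Ici x) = 1 :=
    le_antisymm measureReal_le_one (hc ▸ measureReal_mono (Ici_subset_Ici.2 hxc))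
  rw [hx]
  exact tendsto_of_tendsto_of_tendsto_of_le_of_le (hc ▸ h c le_rfl) tendsto_const_nhds
    (fun i ↦ measureReal_mono (Ici_subset_Ici.2 hxc)) fun i ↦ measureReal_le_one

variable [SecondCountableTopology E] [DenselyOrdered E] [NoMinOrder E] [NoMaxOrder E]
  [l.IsCountablyGenerated]

lemma tendsto_probabilityMeasure_of_tendsto_measureReal_Ici {μ : ι → ProbabilityMeasure E}
    {ν : ProbabilityMeasure E}
    (h : ∀ x, Tendsto (fun i ↦ (μ i : Measure E).real (Ici x)) l
      (𝓝 ((ν : Measure E).real (Ici x)))) :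
    Tendsto μ l (𝓝 ν) := by
  refine (isPiSystem_Ico (id : E → E) id).tendsto_probabilityMeasure_of_tendsto_of_mem ?_ ?_ ?_
  · rintro s ⟨a, b, -, rfl⟩
    exact measurableSet_Ico
  · intro u hu x hx
    obtain ⟨⟨a, b⟩, ⟨hax, hxb⟩, hab⟩ := (nhds_basis_Ioo x).mem_iff.1 (hu.mem_nhds hx)
    obtain ⟨a', haa', ha'x⟩ := exists_between hax
    exact ⟨Ico a' b, ⟨a', b, ha'x.trans hxb, rfl⟩, Ico_mem_nhds ha'x hxb,
      (Ico_subset_Ioo_left haa').trans hab⟩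
  · rintro s ⟨a, b, hab, rfl⟩
    rw [← NNReal.tendsto_coe]
    have hlim := (h a).sub (h b)
    simp only [← measureReal_Ico_eq_sub _ (show a ≤ b from hab.le)] at hlim
    exact hlim

lemma tendsto_integral_of_tendsto_measureReal_le {Ω : Type*} [MeasurableSpace Ω] {P : Measure Ω}
    [IsProbabilityMeasure P] {Y : ι → Ω → E} (hY : ∀ i, Measurable (Y i))
    {ν : ProbabilityMeasure E} {c : E} (hν : (ν : Measure E) (Iio c) = 0)
    (h : ∀ x ≥ c, Tendsto (fun i ↦ P.real {ω | x ≤ Y i ω}) l (𝓝 ((ν : Measure E).real (Ici x))))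
    (φ : BoundedContinuousFunction E ℝ) :
    Tendsto (fun i ↦ ∫ ω, φ (Y i ω) ∂P) l (𝓝 (∫ x, φ x ∂(ν : Measure E))) := by
  let law (i : ι) : ProbabilityMeasure E :=
    ⟨P.map (Y i), Measure.isProbabilityMeasure_map (hY i).aemeasurable⟩
  have hIci (i : ι) (x : E) : (law i : Measure E).real (Ici x) = P.real {ω | x ≤ Y i ω} :=
    map_measureReal_apply (hY i) measurableSet_Ici
  have hweak : Tendsto law l (𝓝 ν) :=
    tendsto_probabilityMeasure_of_tendsto_measureReal_Ici <|
      tendsto_measureReal_Ici_of_forall_ge hν (by simpa only [hIci] using h)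
  refine (ProbabilityMeasure.tendsto_iff_forall_integral_tendsto.1 hweak φ).congr fun i ↦ ?_
  exact integral_map (hY i).aemeasurable φ.continuous.aestronglyMeasurable

end WeakConvergence

section Symmetric

lemma continuous_measureReal_Ici (μ : Measure ℝ) [IsFiniteMeasure μ] [NullSingletonClass μ] :
    Continuous fun x ↦ μ.real (Ici x) := by
  refine continuous_iff_continuousAt.2 fun x ↦ (ENNReal.tendsto_toReal (measure_ne_top _ _)).comp ?_
  refine tendsto_measure_of_ae_tendsto_indicator_of_isFiniteMeasure (𝓝 x) measurableSet_Ici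
    (fun _ ↦ measurableSet_Ici) ?_
  filter_upwards [compl_mem_ae_iff.2 (measure_singleton x)] with y hy
  rcases lt_or_gt_of_ne (show y ≠ x from hy) with hyx | hxy
  · filter_upwards [lt_mem_nhds hyx] with z hz
    simp only [mem_Ici, hz.not_ge, hyx.not_ge]
  · filter_upwards [gt_mem_nhds hxy] with z hz
    simp only [mem_Ici, hz.le, hxy.le]

lemma map_abs_Iio_zero (μ : Measure ℝ) : μ.map (fun y ↦ |y|) (Iio 0) = 0 := by
  rw [Measure.map_apply (by fun_prop) measurableSet_Iio]
  simp [preimage, (abs_nonneg _).not_gt]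

lemma measureReal_map_abs_Ici (μ : Measure ℝ) [IsFiniteMeasure μ] [μ.IsNegInvariant]
    [NullSingletonClass μ] {x : ℝ} (hx : 0 ≤ x) :
    (μ.map (fun y ↦ |y|)).real (Ici x) = 2 * μ.real (Ici x) := by
  have hpre : (fun y : ℝ ↦ |y|) ⁻¹' Ici x = Ici x ∪ Iic (-x) := by
    ext y
    simp only [mem_preimage, mem_Ici, mem_union, mem_Iic, le_abs, le_neg]
  have hneg : μ.real (Iic (-x)) = μ.real (Ici x) := by
    rw [← neg_Ici, measureReal_def, Measure.measure_neg, measureReal_def]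
  have hdisj : AEDisjoint μ (Ici x) (Iic (-x)) :=
    measure_mono_null (fun y hy ↦ le_antisymm (hy.2.trans (neg_nonpos.2 hx)) (hx.trans hy.1))
      (measure_singleton 0)
  rw [map_measureReal_apply (by fun_prop) measurableSet_Ici, hpre,
    measureReal_union₀ measurableSet_Iic.nullMeasurableSet hdisj, hneg, two_mul]

instance isNegInvariant_gaussianReal (v : NNReal) : (gaussianReal 0 v).IsNegInvariant :=
  ⟨gaussianReal_map_neg.trans (by rw [neg_zero])⟩

instance nullSingletonClass_gaussianReal_one : NullSingletonClass (gaussianReal 0 1) :=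
  nullSingletonClass_gaussianReal one_ne_zero

lemma measureReal_Ici_zero (μ : Measure ℝ) [IsProbabilityMeasure μ] [μ.IsNegInvariant]
    [NullSingletonClass μ] : μ.real (Ici 0) = 1 / 2 := by
  have huniv : (μ.map (fun y ↦ |y|)).real (Ici 0) = 1 := by
    rw [map_measureReal_apply (by fun_prop) measurableSet_Ici]
    simp [preimage, mem_Ici]
  linarith [measureReal_map_abs_Ici μ le_rfl]

end Symmetric

section Tail

variable {Ω : Type*} [MeasurableSpace Ω] {P : Measure Ω} [IsFiniteMeasure P] {Y : Ω → ℝ} {c : ℝ}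

lemma tendsto_measure_mul_sqrt_le_abs (hY : Measurable Y) (hc : 0 < c) :
    Tendsto (fun n : ℕ ↦ P {ω | c * √n ≤ |Y ω|}) atTop (𝓝 0) := by
  have hdiv : Tendsto (fun n : ℕ ↦ c * √n) atTop atTop :=
    (Real.tendsto_sqrt_atTop.comp tendsto_natCast_atTop_atTop).const_mul_atTop hc
  rw [← measure_empty (μ := P)]
  refine tendsto_measure_of_tendsto_indicator_of_isFiniteMeasure atTop P
    (fun n ↦ measurableSet_le measurable_const hY.abs) fun ω ↦ ?_
  filter_upwards [hdiv.eventually_gt_atTop |Y ω|] with n hn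
  simpa only [mem_ofPred_eq, mem_empty_iff_false, iff_false, not_le] using hn

lemma tendsto_measureReal_mul_sqrt_le_abs (hY : Measurable Y) (hc : 0 < c) :
    Tendsto (fun n : ℕ ↦ P.real {ω | c * √n ≤ |Y ω|}) atTop (𝓝 0) :=
  (ENNReal.tendsto_toReal ENNReal.zero_ne_top).comp (tendsto_measure_mul_sqrt_le_abs hY hc)

lemma tendsto_natCast_mul_measureReal_mul_sqrt_le_abs (hY : Measurable Y)
    (hY2 : Integrable (fun ω ↦ Y ω ^ 2) P) (hc : 0 < c) :
    Tendsto (fun n : ℕ ↦ n * P.real {ω | c * √n ≤ |Y ω|}) atTop (𝓝 0) := by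
  have hint : Tendsto (fun n : ℕ ↦ (c ^ 2)⁻¹ * ∫ ω in {ω | c * √n ≤ |Y ω|}, Y ω ^ 2 ∂P) atTop
      (𝓝 0) := by
    simpa using (hY2.tendsto_setIntegral_nhds_zero
      (tendsto_measure_mul_sqrt_le_abs hY hc)).const_mul (c ^ 2)⁻¹
  refine squeeze_zero (fun n ↦ by positivity) (fun n ↦ ?_) hint
  rw [le_inv_mul_iff₀ (by positivity)]
  calc c ^ 2 * (n * P.real {ω | c * √n ≤ |Y ω|})
      = ∫ ω in {ω | c * √n ≤ |Y ω|}, (c * √n) ^ 2 ∂P := by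
        rw [setIntegral_const, smul_eq_mul, mul_pow, Real.sq_sqrt n.cast_nonneg]; ring
    _ ≤ ∫ ω in {ω | c * √n ≤ |Y ω|}, Y ω ^ 2 ∂P := by
        refine setIntegral_mono_on (integrable_const _).integrableOn hY2.integrableOn
          (measurableSet_le measurable_const hY.abs) fun ω hω ↦ ?_
        exact sq_le_sq.2 ((abs_of_nonneg (by positivity)).trans_le hω)

end Tail

section Walk

variable {Ω : Type*}

/-- The random walk `S_n = X 0 + ⋯ + X (n - 1)` with steps `X`. -/
def walk (X : ℕ → Ω → ℝ) (n : ℕ) (ω : Ω) : ℝ := ∑ i ∈ Finset.range n, X i ω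

/-- The event that the walk reaches the level `a` at some time in `{1, …, n}`. -/
def crossing (X : ℕ → Ω → ℝ) (a : ℝ) (n : ℕ) : Set Ω :=
  {ω | ∃ k ∈ Finset.Icc 1 n, a ≤ walk X k ω}

/-- The event that the walk reaches the level `a` for the first time at time `k + 1`; time `0` does
not count as a passage. -/
def firstPassage (X : ℕ → Ω → ℝ) (a : ℝ) : ℕ → Set Ω :=
  disjointed fun k ↦ {ω | a ≤ walk X (k + 1) ω}

/-- The event that the walk reaches the level `a` by time `n` and, at time `N`, is no lower than
at its first passage: the event to which the reflection argument compares `crossing X a n`. -/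
def heldCrossing (X : ℕ → Ω → ℝ) (a : ℝ) (n N : ℕ) : Set Ω :=
  ⋃ k ∈ Finset.range n, firstPassage X a k ∩ {ω | walk X (k + 1) ω ≤ walk X N ω}

variable {X : ℕ → Ω → ℝ} {a : ℝ} {k n : ℕ}

lemma mem_firstPassage {ω : Ω} : ω ∈ firstPassage X a k ↔
    a ≤ walk X (k + 1) ω ∧ ∀ j < k, walk X (j + 1) ω < a := by
  simp [firstPassage, disjointed_eq_inter_compl]

lemma walk_succ (X : ℕ → Ω → ℝ) (n : ℕ) (ω : Ω) : walk X (n + 1) ω = walk X n ω + X n ω :=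
  Finset.sum_range_succ _ _

lemma walk_sub_walk {N : ℕ} (h : n ≤ N) (ω : Ω) :
    walk X N ω - walk X n ω = ∑ i ∈ Finset.Ico n N, X i ω :=
  (Finset.sum_Ico_eq_sub _ h).symm

lemma walk_le_of_mem_firstPassage (ha : 0 ≤ a) {ω : Ω} (hω : ω ∈ firstPassage X a k) :
    walk X k ω ≤ a := by
  cases k with
  | zero => simpa [walk] using ha
  | succ j => exact ((mem_firstPassage.1 hω).2 j j.lt_succ_self).le

lemma biUnion_firstPassage (X : ℕ → Ω → ℝ) (a : ℝ) (n : ℕ) :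
    ⋃ k ∈ Finset.range n, firstPassage X a k = crossing X a n := by
  cases n with
  | zero => simp [crossing]
  | succ n =>
    rw [firstPassage, biUnion_range_succ_disjointed, partialSups_eq_biUnion_range]
    ext ω
    simp only [mem_iUnion, mem_ofPred_eq, exists_prop, crossing, Finset.mem_range, Finset.mem_Icc]
    constructor
    · rintro ⟨k, hk, ha⟩
      exact ⟨k + 1, by omega, ha⟩
    · rintro ⟨k, hk, ha⟩
      exact ⟨k - 1, by omega, by rwa [Nat.sub_add_cancel hk.1]⟩

lemma measurable_walk [MeasurableSpace Ω] (hX : ∀ i < n, Measurable (X i)) :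
    Measurable (walk X n) :=
  Finset.measurable_fun_sum _ fun i hi ↦ hX i (Finset.mem_range.1 hi)

lemma measurableSet_firstPassage {m : MeasurableSpace Ω} (hX : ∀ i ≤ k, Measurable[m] (X i)) :
    MeasurableSet[m] (firstPassage X a k) := by
  have hset : firstPassage X a k = {ω | a ≤ walk X (k + 1) ω} ∩
      ⋂ j ∈ Finset.range k, {ω | walk X (j + 1) ω < a} := by
    ext ω; simp [mem_firstPassage]
  rw [hset]
  refine (measurableSet_le measurable_const (measurable_walk fun i hi ↦ hX i (by omega))).inter
    (Finset.measurableSet_biInter _ fun j hj ↦ measurableSet_lt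
      (measurable_walk fun i hi ↦ hX i ?_) measurable_const)
  have := Finset.mem_range.1 hj
  omega

lemma pairwiseDisjoint_firstPassage (X : ℕ → Ω → ℝ) (a : ℝ) (s : Set ℕ) :
    s.PairwiseDisjoint (firstPassage X a) :=
  (disjoint_disjointed _).set_pairwise s

lemma measurableSet_crossing [MeasurableSpace Ω] (hX : ∀ i, Measurable (X i)) :
    MeasurableSet (crossing X a n) := by
  rw [← biUnion_firstPassage]
  exact Finset.measurableSet_biUnion _ fun k _ ↦ measurableSet_firstPassage fun i _ ↦ hX i

lemma heldCrossing_subset (X : ℕ → Ω → ℝ) (a : ℝ) (n N : ℕ) :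
    heldCrossing X a n N ⊆ {ω | a ≤ walk X N ω} := by
  refine iUnion₂_subset fun k _ ω hω ↦ ?_
  exact (mem_firstPassage.1 hω.1).1.trans hω.2

lemma setOf_add_le_walk_subset (ha : 0 ≤ a) (ε : ℝ) (n N : ℕ) :
    {ω | a + 2 * ε ≤ walk X n ω} ⊆ heldCrossing X a n N ∪
      {ω | ε ≤ |walk X N ω - walk X n ω|} ∪ ⋃ k ∈ Finset.range n, {ω | ε ≤ |X k ω|} := by
  intro ω hω
  by_contra hout
  simp only [mem_union, not_or, mem_iUnion, exists_prop, not_exists, not_and, mem_ofPred_eq,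
    not_le, abs_lt] at hω hout
  obtain ⟨⟨hheld, hblock⟩, hjump⟩ := hout
  have hn : 1 ≤ n := by
    rw [Nat.one_le_iff_ne_zero]
    rintro rfl
    simp only [walk, Finset.range_zero, Finset.sum_empty] at hω
    linarith
  have hcross : ω ∈ crossing X a n := ⟨n, Finset.mem_Icc.2 ⟨hn, le_rfl⟩, by linarith⟩
  rw [← biUnion_firstPassage, mem_iUnion₂] at hcross
  obtain ⟨k, hk, hpass⟩ := hcross
  have hovershoot : walk X (k + 1) ω < a + ε := by
    rw [walk_succ]
    exact add_lt_add_of_le_of_lt (walk_le_of_mem_firstPassage ha hpass) (hjump k hk).2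
  exact hheld (mem_biUnion hk ⟨hpass, show walk X (k + 1) ω ≤ walk X N ω by linarith⟩)

end Walk

section IID

variable {Ω : Type*} [MeasurableSpace Ω] {P : Measure Ω} {X : ℕ → Ω → ℝ} {a q : ℝ} {n N : ℕ}

lemma identDistrib_walk_sub_walk (hindep : iIndepFun X P)
    (hident : ∀ i, IdentDistrib (X i) (X 0) P P) (h : n ≤ N) :
    IdentDistrib (fun ω ↦ walk X N ω - walk X n ω) (walk X (N - n)) P P := by
  have hshift := IdentDistrib.pi (fun i ↦ (hident (n + i)).trans (hident i).symm)
    (hindep.precomp (add_right_injective n)) hindep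
  have hsum : Measurable fun x : ℕ → ℝ ↦ ∑ i ∈ Finset.range (N - n), x i := by fun_prop
  simp only [walk_sub_walk h, Finset.sum_Ico_eq_sum_range]
  exact hshift.comp hsum

lemma indepSet_firstPassage_walk_sub_walk (hX : ∀ i, Measurable (X i)) (hindep : iIndepFun X P)
    {k : ℕ} (hk : k < N) {T : Set ℝ} (hT : MeasurableSet T) :
    IndepSet (firstPassage X a k) {ω | walk X N ω - walk X (k + 1) ω ∈ T} P := by
  let past : MeasurableSpace Ω := ⨆ i ∈ Iic k, MeasurableSpace.comap (X i) inferInstance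
  let future : MeasurableSpace Ω := ⨆ i ∈ Ioi k, MeasurableSpace.comap (X i) inferInstance
  have hpf : Indep past future P :=
    indep_iSup_of_disjoint (fun i ↦ (hX i).comap_le) hindep.iIndep (Iic_disjoint_Ioi le_rfl)
  have hpast : MeasurableSet[past] (firstPassage X a k) :=
    measurableSet_firstPassage fun i hi ↦
      measurable_iff_comap_le.2 (le_iSup₂_of_le i hi le_rfl)
  have hfuture : Measurable[future] fun ω ↦ walk X N ω - walk X (k + 1) ω := by
    simp only [walk_sub_walk (Nat.succ_le_of_lt hk)]
    exact Finset.measurable_fun_sum _ fun i hi ↦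
      measurable_iff_comap_le.2 (le_iSup₂_of_le i (Finset.mem_Ico.1 hi).1 le_rfl)
  exact hpf.indepSet_of_measurableSet hpast (hfuture hT)

lemma measureReal_le_abs_walk_sub_walk (hindep : iIndepFun X P)
    (hident : ∀ i, IdentDistrib (X i) (X 0) P P) (ε : ℝ) (n N : ℕ) :
    P.real {ω | ε ≤ |walk X (n + N) ω - walk X n ω|} = P.real {ω | ε ≤ |walk X N ω|} := by
  have hlaw := identDistrib_walk_sub_walk hindep hident (n.le_add_right N)
  rw [Nat.add_sub_cancel_left] at hlaw
  exact congrArg ENNReal.toReal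
    (hlaw.measure_mem_eq (measurableSet_le measurable_const measurable_id.abs))

lemma measureReal_firstPassage_inter (hX : ∀ i, Measurable (X i)) (hindep : iIndepFun X P)
    (hident : ∀ i, IdentDistrib (X i) (X 0) P P) {k : ℕ} (hk : k < N) :
    P.real (firstPassage X a k ∩ {ω | walk X (k + 1) ω ≤ walk X N ω}) =
      P.real (firstPassage X a k) * P.real {ω | 0 ≤ walk X (N - (k + 1)) ω} := by
  have hlaw : P {ω | walk X N ω - walk X (k + 1) ω ∈ Ici 0} =
      P {ω | 0 ≤ walk X (N - (k + 1)) ω} :=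
    (identDistrib_walk_sub_walk hindep hident (Nat.succ_le_of_lt hk)).measure_mem_eq
      measurableSet_Ici
  have hmul := (indepSet_firstPassage_walk_sub_walk (a := a) hX hindep hk
    (measurableSet_Ici (a := 0))).measure_inter_eq_mul
  rw [hlaw] at hmul
  simp only [mem_Ici, sub_nonneg] at hmul
  rw [measureReal_def, hmul, ENNReal.toReal_mul, measureReal_def, measureReal_def]

variable [IsFiniteMeasure P]

lemma measureReal_crossing (hX : ∀ i, Measurable (X i)) (a : ℝ) (n : ℕ) :
    P.real (crossing X a n) = ∑ k ∈ Finset.range n, P.real (firstPassage X a k) := by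
  rw [← biUnion_firstPassage, measureReal_biUnion_finset (pairwiseDisjoint_firstPassage X a _)
    fun k _ ↦ measurableSet_firstPassage fun i _ ↦ hX i]

lemma measureReal_heldCrossing (hX : ∀ i, Measurable (X i)) (hindep : iIndepFun X P)
    (hident : ∀ i, IdentDistrib (X i) (X 0) P P) (a : ℝ) (h : n ≤ N) :
    P.real (heldCrossing X a n N) = ∑ k ∈ Finset.range n,
      P.real (firstPassage X a k) * P.real {ω | 0 ≤ walk X (N - (k + 1)) ω} := by
  have hwalk (m : ℕ) : Measurable (walk X m) := measurable_walk fun i _ ↦ hX i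
  rw [heldCrossing, measureReal_biUnion_finset]
  · refine Finset.sum_congr rfl fun k hk ↦ measureReal_firstPassage_inter hX hindep hident ?_
    exact (Finset.mem_range.1 hk).trans_le h
  · exact (pairwiseDisjoint_firstPassage X a _).mono fun k ↦ inter_subset_left
  · exact fun k _ ↦ (measurableSet_firstPassage fun i _ ↦ hX i).inter
      (measurableSet_le (hwalk _) (hwalk _))

lemma mul_measureReal_crossing_le (hX : ∀ i, Measurable (X i)) (hindep : iIndepFun X P)
    (hident : ∀ i, IdentDistrib (X i) (X 0) P P)
    (hq : ∀ m ≥ N, q ≤ P.real {ω | 0 ≤ walk X m ω}) (a : ℝ) (n : ℕ) :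
    q * P.real (crossing X a n) ≤ P.real (heldCrossing X a n (n + N)) := by
  rw [measureReal_crossing hX, measureReal_heldCrossing hX hindep hident a (n.le_add_right N),
    mul_comm, Finset.sum_mul]
  refine Finset.sum_le_sum fun k hk ↦ mul_le_mul_of_nonneg_left (hq _ ?_) measureReal_nonneg
  have := Finset.mem_range.1 hk
  omega

lemma measureReal_heldCrossing_le_mul (hX : ∀ i, Measurable (X i)) (hindep : iIndepFun X P)
    (hident : ∀ i, IdentDistrib (X i) (X 0) P P)
    (hq : ∀ m ≥ N, P.real {ω | 0 ≤ walk X m ω} ≤ q) (a : ℝ) (n : ℕ) :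
    P.real (heldCrossing X a n (n + N)) ≤ q * P.real (crossing X a n) := by
  rw [measureReal_crossing hX, measureReal_heldCrossing hX hindep hident a (n.le_add_right N),
    mul_comm, Finset.sum_mul]
  refine Finset.sum_le_sum fun k hk ↦ mul_le_mul_of_nonneg_left (hq _ ?_) measureReal_nonneg
  have := Finset.mem_range.1 hk
  omega

lemma measureReal_heldCrossing_le (hindep : iIndepFun X P)
    (hident : ∀ i, IdentDistrib (X i) (X 0) P P) (a ε : ℝ) (n N : ℕ) :
    P.real (heldCrossing X a n (n + N)) ≤
      P.real {ω | a - ε ≤ walk X n ω} + P.real {ω | ε ≤ |walk X N ω|} := by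
  rw [← measureReal_le_abs_walk_sub_walk hindep hident ε n N]
  refine (measureReal_mono fun ω hω ↦ ?_).trans (measureReal_union_le _ _)
  have ha : a ≤ walk X (n + N) ω := heldCrossing_subset X a n (n + N) hω
  rcases le_or_gt ε |walk X (n + N) ω - walk X n ω| with he | he
  · exact .inr he
  · exact .inl (show a - ε ≤ walk X n ω by linarith [(abs_lt.1 he).2])

lemma measureReal_add_le_walk_le (hindep : iIndepFun X P)
    (hident : ∀ i, IdentDistrib (X i) (X 0) P P) (ha : 0 ≤ a) (ε : ℝ) (n N : ℕ) :
    P.real {ω | a + 2 * ε ≤ walk X n ω} ≤ P.real (heldCrossing X a n (n + N)) +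
      P.real {ω | ε ≤ |walk X N ω|} + n * P.real {ω | ε ≤ |X 0 ω|} := by
  have hjump : P.real (⋃ k ∈ Finset.range n, {ω | ε ≤ |X k ω|}) ≤ n * P.real {ω | ε ≤ |X 0 ω|} := by
    have hlaw (k : ℕ) : P.real {ω | ε ≤ |X k ω|} = P.real {ω | ε ≤ |X 0 ω|} :=
      congrArg ENNReal.toReal
        ((hident k).measure_mem_eq (measurableSet_le measurable_const measurable_id.abs))
    simpa [hlaw] using
      measureReal_biUnion_finset_le (μ := P) (Finset.range n) fun k ↦ {ω | ε ≤ |X k ω|}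
  rw [← measureReal_le_abs_walk_sub_walk hindep hident ε n N]
  calc P.real {ω | a + 2 * ε ≤ walk X n ω}
      ≤ _ := measureReal_mono (setOf_add_le_walk_subset ha ε n (n + N))
    _ ≤ _ := measureReal_union_le _ _
    _ ≤ _ := add_le_add (measureReal_union_le _ _) hjump

end IID

section Limit

variable {Ω : Type*} [MeasurableSpace Ω] {P : Measure Ω} [IsProbabilityMeasure P] {X : ℕ → Ω → ℝ}

lemma tendsto_measureReal_mul_sqrt_le_walk (hindep : iIndepFun X P)
    (hident : ∀ i, IdentDistrib (X i) (X 0) P P) (hmean : ∫ ω, X 0 ω ∂P = 0)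
    (hvar : ∫ ω, X 0 ω ^ 2 ∂P = 1) (x : ℝ) :
    Tendsto (fun n : ℕ ↦ P.real {ω | x * √n ≤ walk X n ω}) atTop
      (𝓝 ((gaussianReal 0 1).real (Ici x))) := by
  have hclt := tendstoInDistribution_inv_sqrt_mul_sum HasLaw.id hmean hvar hindep hident
  have hnull : (gaussianReal 0 1).map id (frontier (Ici x)) = 0 := by
    rw [Measure.map_id, frontier_Ici, measure_singleton]
  have hlim := ProbabilityMeasure.tendsto_measure_of_null_frontier_of_tendsto' hclt.tendsto hnull
  simp only [ProbabilityMeasure.coe_mk, Measure.map_id] at hlim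
  refine ((ENNReal.tendsto_toReal (measure_ne_top _ _)).comp hlim).congr' ?_
  filter_upwards [eventually_ge_atTop 1] with n hn
  have hsqrt : 0 < √(n : ℝ) := Real.sqrt_pos.2 (by exact_mod_cast hn)
  rw [Function.comp_apply,
    Measure.map_apply_of_aemeasurable (hclt.forall_aemeasurable n) measurableSet_Ici]
  simp only [preimage, mem_Ici, le_inv_mul_iff₀ hsqrt, mul_comm, walk, measureReal_def]

lemma tendsto_measureReal_zero_le_walk (hindep : iIndepFun X P)
    (hident : ∀ i, IdentDistrib (X i) (X 0) P P) (hmean : ∫ ω, X 0 ω ∂P = 0)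
    (hvar : ∫ ω, X 0 ω ^ 2 ∂P = 1) :
    Tendsto (fun n : ℕ ↦ P.real {ω | 0 ≤ walk X n ω}) atTop (𝓝 (1 / 2)) := by
  simpa [measureReal_Ici_zero] using
    tendsto_measureReal_mul_sqrt_le_walk hindep hident hmean hvar 0

lemma eventually_measureReal_crossing_lt (hX : ∀ i, Measurable (X i)) (hindep : iIndepFun X P)
    (hident : ∀ i, IdentDistrib (X i) (X 0) P P) (hmean : ∫ ω, X 0 ω ∂P = 0)
    (hvar : ∫ ω, X 0 ω ^ 2 ∂P = 1) {x b : ℝ} (hb : 2 * (gaussianReal 0 1).real (Ici x) < b) :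
    ∀ᶠ n : ℕ in atTop, P.real (crossing X (x * √n) n) < b := by
  set G : ℝ → ℝ := fun y ↦ (gaussianReal 0 1).real (Ici y) with hG
  obtain ⟨δ, hδb, hδ0, hδ1⟩ : ∃ δ : ℝ, G (x - δ) / (1 / 2 - δ) < b ∧ 0 < δ ∧ δ < 1 / 2 := by
    have hcont : ContinuousAt (fun δ : ℝ ↦ G (x - δ) / (1 / 2 - δ)) 0 :=
      ((continuous_measureReal_Ici _).comp (by fun_prop)).continuousAt.div (by fun_prop)
        (by norm_num)
    have hlt := hcont.eventually_lt_const (show _ < b by simpa [hG, mul_comm] using hb)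
    exact ((hlt.filter_mono nhdsWithin_le_nhds).and
      (Ioo_mem_nhdsGT (by norm_num : (0 : ℝ) < 1 / 2))).exists
  obtain ⟨N, hN⟩ := eventually_atTop.1
    ((tendsto_measureReal_zero_le_walk hindep hident hmean hvar).eventually_const_le
      (show 1 / 2 - δ < 1 / 2 by linarith))
  have hlim := ((tendsto_measureReal_mul_sqrt_le_walk hindep hident hmean hvar (x - δ)).add
    (tendsto_measureReal_mul_sqrt_le_abs (P := P) (measurable_walk (n := N) fun i _ ↦ hX i)
      hδ0)).div_const (1 / 2 - δ)
  rw [add_zero] at hlim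
  filter_upwards [hlim.eventually_lt_const hδb] with n hn
  refine lt_of_le_of_lt ((le_div_iff₀' (by linarith)).2 ?_) hn
  rw [sub_mul x]
  exact (mul_measureReal_crossing_le hX hindep hident hN _ n).trans
    (measureReal_heldCrossing_le hindep hident _ _ n N)

lemma eventually_lt_measureReal_crossing (hX : ∀ i, Measurable (X i)) (hindep : iIndepFun X P)
    (hident : ∀ i, IdentDistrib (X i) (X 0) P P) (hmean : ∫ ω, X 0 ω ∂P = 0)
    (hvar : ∫ ω, X 0 ω ^ 2 ∂P = 1) {x b : ℝ} (hx : 0 ≤ x)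
    (hb : b < 2 * (gaussianReal 0 1).real (Ici x)) :
    ∀ᶠ n : ℕ in atTop, b < P.real (crossing X (x * √n) n) := by
  set G : ℝ → ℝ := fun y ↦ (gaussianReal 0 1).real (Ici y) with hG
  obtain ⟨δ, hδb, hδ0⟩ : ∃ δ : ℝ, b < G (x + 2 * δ) / (1 / 2 + δ) ∧ 0 < δ := by
    have hcont : ContinuousAt (fun δ : ℝ ↦ G (x + 2 * δ) / (1 / 2 + δ)) 0 :=
      ((continuous_measureReal_Ici _).comp (by fun_prop)).continuousAt.div (by fun_prop)
        (by norm_num)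
    have hlt := hcont.eventually_const_lt (show b < _ by simpa [hG, mul_comm] using hb)
    exact ((hlt.filter_mono nhdsWithin_le_nhds).and
      (self_mem_nhdsWithin : Ioi (0 : ℝ) ∈ 𝓝[>] 0)).exists
  obtain ⟨N, hN⟩ := eventually_atTop.1
    ((tendsto_measureReal_zero_le_walk hindep hident hmean hvar).eventually_le_const
      (show 1 / 2 < 1 / 2 + δ by linarith))
  have hlim := (((tendsto_measureReal_mul_sqrt_le_walk hindep hident hmean hvar (x + 2 * δ)).sub
    (tendsto_measureReal_mul_sqrt_le_abs (P := P) (measurable_walk (n := N) fun i _ ↦ hX i)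
      hδ0)).sub (tendsto_natCast_mul_measureReal_mul_sqrt_le_abs (P := P) (hX 0)
      (integrable_of_integral_eq_one hvar) hδ0)).div_const (1 / 2 + δ)
  rw [sub_zero, sub_zero] at hlim
  filter_upwards [hlim.eventually_const_lt hδb] with n hn
  refine hn.trans_le ((div_le_iff₀' (by linarith)).2 ?_)
  have hlower := measureReal_add_le_walk_le hindep hident (a := x * √n) (by positivity) (δ * √n) n N
  rw [← mul_assoc, ← add_mul] at hlower
  linarith [measureReal_heldCrossing_le_mul hX hindep hident hN (x * √n) n]

lemma tendsto_measureReal_crossing (hX : ∀ i, Measurable (X i)) (hindep : iIndepFun X P)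
    (hident : ∀ i, IdentDistrib (X i) (X 0) P P) (hmean : ∫ ω, X 0 ω ∂P = 0)
    (hvar : ∫ ω, X 0 ω ^ 2 ∂P = 1) {x : ℝ} (hx : 0 ≤ x) :
    Tendsto (fun n : ℕ ↦ P.real (crossing X (x * √n) n)) atTop
      (𝓝 (2 * (gaussianReal 0 1).real (Ici x))) :=
  tendsto_order.2
    ⟨fun _ ↦ eventually_lt_measureReal_crossing hX hindep hident hmean hvar hx,
      fun _ ↦ eventually_measureReal_crossing_lt hX hindep hident hmean hvar⟩

end Limit

end

/-- The Erdős–Kac limit theorem: if `X 0, X 1, …` are i.i.d. with mean `0` and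
variance `1`, and `Sbar n = max_{1 ≤ k ≤ n} (X 0 + ⋯ + X (k-1))`, then
`Sbar n / √n` converges in distribution to `|Z|`, where `Z` is standard normal;
convergence in distribution is expressed by testing against all bounded
continuous functions. -/
theorem stmt13 {Ω : Type*} [MeasureSpace Ω] [IsProbabilityMeasure (ℙ : Measure Ω)]
    (X : ℕ → Ω → ℝ) (hmeas : ∀ i, Measurable (X i))
    (hindep : iIndepFun X ℙ)
    (hident : ∀ i, Measure.map (X i) ℙ = Measure.map (X 0) ℙ)
    (hL2 : MemLp (X 0) 2 ℙ)
    (hmean : ∫ ω, X 0 ω ∂ℙ = 0)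
    (hvar : ∫ ω, (X 0 ω) ^ 2 ∂ℙ = 1)
    (Sbar : ℕ → Ω → ℝ)
    (hSbar : ∀ n, ∀ hn : 1 ≤ n, ∀ ω, Sbar n ω =
      (Finset.Icc 1 n).sup' (Finset.nonempty_Icc.mpr hn)
        (fun k => ∑ i ∈ Finset.range k, X i ω)) :
    ∀ φ : BoundedContinuousFunction ℝ ℝ,
      Tendsto (fun n => ∫ ω, φ (Sbar n ω / Real.sqrt n) ∂ℙ) atTop
        (nhds (∫ x, φ x ∂(Measure.map (fun y => |y|) (gaussianReal 0 1)))) := by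
  intro φ
  have hmax (n : ℕ) (x : ℝ) :
      {ω | x ≤ Sbar (n + 1) ω / √(n + 1 : ℕ)} = crossing X (x * √(n + 1 : ℕ)) (n + 1) := by
    ext ω
    have hsqrt : 0 < √((n + 1 : ℕ) : ℝ) := Real.sqrt_pos.2 (by positivity)
    rw [Set.mem_ofPred_eq, le_div_iff₀ hsqrt, hSbar _ n.succ_pos, Finset.le_sup'_iff]
    rfl
  let ν : ProbabilityMeasure ℝ := ⟨(gaussianReal 0 1).map fun y ↦ |y|,
    Measure.isProbabilityMeasure_map (by fun_prop)⟩
  refine (tendsto_add_atTop_iff_nat 1).1 <|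
    tendsto_integral_of_tendsto_measureReal_le (ν := ν) (fun n ↦ measurable_of_Ici fun x ↦ ?_)
      (map_abs_Iio_zero _) (fun x hx ↦ ?_) φ
  · change MeasurableSet {ω | x ≤ Sbar (n + 1) ω / √(n + 1 : ℕ)}
    exact hmax n x ▸ measurableSet_crossing hmeas
  · have hident' (i : ℕ) : IdentDistrib (X i) (X 0) ℙ ℙ :=
      ⟨(hmeas i).aemeasurable, (hmeas 0).aemeasurable, hident i⟩
    simp only [hmax]
    rw [show (ν : Measure ℝ).real (Set.Ici x) = _ from measureReal_map_abs_Ici _ hx]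
    exact (tendsto_measureReal_crossing hmeas hindep hident' hmean hvar hx).comp
      (tendsto_add_atTop_nat 1)
end
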